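/- arXiv:1109.1079 — 8 statements merged into one kernel-verified Lean document; each statement's English description precedes it below -/
import Mathlib

section
/- Let n, r be positive integers with r ≤ n and let F be a maximal intersecting family of r-element subsets of [n] with ∪F = [n]. Then Δ(F) ≤ (n + r^r) · δ(F); that is, the ratio of the maximum degree to the minimum degree of F is at most n + r^r. -/
/-- The degree of `x` in the family `F`: the number of members of `F` containing `x`. -/
def degree (F : Finset (Finset ℕ)) (x : ℕ) : ℕ := (F.filter (fun A => x ∈ A)).card

/-- `F` is an intersecting family: any two members have nonempty intersection. -/
def IsIntersecting (F : Finset (Finset ℕ)) : Prop :=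
  ∀ A ∈ F, ∀ B ∈ F, (A ∩ B).Nonempty

/-- `F` is a family of `r`-element subsets of `[n] = {1,…,n}`. -/
def IsFamily (n r : ℕ) (F : Finset (Finset ℕ)) : Prop :=
  ∀ A ∈ F, A ⊆ Finset.Icc 1 n ∧ A.card = r

/-- `F` is a maximal intersecting family of `r`-subsets of `[n]`: it is intersecting and
every `r`-subset of `[n]` not in `F` is disjoint from some member of `F`. -/
def IsMaxIntersecting (n r : ℕ) (F : Finset (Finset ℕ)) : Prop :=
  IsIntersecting F ∧
    ∀ G : Finset ℕ, G ⊆ Finset.Icc 1 n → G.card = r → G ∉ F → ∃ A ∈ F, A ∩ G = ∅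

/-- `∪F = [n]`: every element of `[n]` lies in some member of `F`. -/
def Covers (n : ℕ) (F : Finset (Finset ℕ)) : Prop :=
  ∀ x ∈ Finset.Icc 1 n, ∃ A ∈ F, x ∈ A

/-- `Δ(F)`: the maximum degree over `x ∈ [n]`. -/
noncomputable def maxDeg (n : ℕ) (F : Finset (Finset ℕ)) : ℕ :=
  sSup (degree F '' Set.Icc 1 n)

/-- `δ(F)`: the minimum degree over `x ∈ [n]`. -/
noncomputable def minDeg (n : ℕ) (F : Finset (Finset ℕ)) : ℕ :=
  sInf (degree F '' Set.Icc 1 n)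

/-- Branching bound on minimal transversals of size `r`. -/
theorem card_minimal_le (r : ℕ) (F M : Finset (Finset ℕ))
    (hF : ∀ A ∈ F, A.card = r) (hint : IsIntersecting F) (hMF : M ⊆ F)
    (hM : ∀ A ∈ M, ∀ z ∈ A, ∃ E ∈ F, E ∩ A.erase z = ∅) (k : ℕ) :
    ∀ S : Finset ℕ, S.card + k = r → (M.filter (fun A => S ⊆ A)).card ≤ r ^ k := by
  induction k with
  | zero =>
    intro S hS
    rw [pow_zero, Finset.card_le_one]
    intro A hA B hB
    rw [Finset.mem_filter] at hA hB
    have h1 := Finset.eq_of_subset_of_card_le hA.2 (by rw [hF A (hMF hA.1)]; omega)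
    have h2 := Finset.eq_of_subset_of_card_le hB.2 (by rw [hF B (hMF hB.1)]; omega)
    exact h1.symm.trans h2
  | succ k ih =>
    intro S hS
    rcases (M.filter (fun A => S ⊆ A)).eq_empty_or_nonempty with h | ⟨A, hA⟩
    · rw [h]; simp
    rw [Finset.mem_filter] at hA
    obtain ⟨z, hzA, hzS⟩ : ∃ z ∈ A, z ∉ S :=
      Finset.exists_mem_notMem_of_card_lt_card (by rw [hF A (hMF hA.1)]; omega)
    obtain ⟨E, hE, hEA⟩ := hM A hA.1 z hzA
    have hES : ∀ e ∈ E, e ∉ S := by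
      intro e he heS
      have : e ∈ E ∩ A.erase z :=
        Finset.mem_inter.2 ⟨he, Finset.mem_erase.2 ⟨fun h => hzS (h ▸ heS), hA.2 heS⟩⟩
      rw [hEA] at this
      simp at this
    have hsub : M.filter (fun A => S ⊆ A) ⊆
        E.biUnion (fun e => M.filter (fun A => insert e S ⊆ A)) := by
      intro B hB
      rw [Finset.mem_filter] at hB
      obtain ⟨e, he⟩ := hint E hE B (hMF hB.1)
      rw [Finset.mem_inter] at he
      exact Finset.mem_biUnion.2 ⟨e, he.1,
        Finset.mem_filter.2 ⟨hB.1, Finset.insert_subset he.2 hB.2⟩⟩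
    calc _ ≤ _ := Finset.card_le_card hsub
      _ ≤ E.card * r ^ k := Finset.card_biUnion_le_card_mul _ _ _ (fun e he =>
          ih _ (by rw [Finset.card_insert_of_notMem (hES e he)]; omega))
      _ = r ^ (k + 1) := by rw [hF E hE, pow_succ, mul_comm]

/-- The size of `F` is controlled by every degree. -/
theorem card_le_degree (n r : ℕ) (F : Finset (Finset ℕ)) (hfam : IsFamily n r F)
    (hmax : IsMaxIntersecting n r F) (x : ℕ) (hx : x ∈ Finset.Icc 1 n) :
    F.card ≤ degree F x * n + r ^ r := by
  classical
  set M := F.filter (fun A => ∀ z ∈ A, ∃ E ∈ F, E ∩ A.erase z = ∅) with hMdef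
  have hMc : M.card ≤ r ^ r := by
    have := card_minimal_le r F M (fun A hA => (hfam A hA).2) hmax.1
      (Finset.filter_subset _ _) (fun A hA => (Finset.mem_filter.1 hA).2) r ∅ (by simp)
    simpa using this
  have hsub : F ⊆ (F.filter (fun A => x ∈ A)).biUnion
      (fun B => (Finset.Icc 1 n).image (fun z => insert z (B.erase x))) ∪ M := by
    intro A hA
    rw [Finset.mem_union]
    by_cases hAM : A ∈ M
    · exact Or.inr hAM
    left
    rw [Finset.mem_biUnion]
    by_cases hxA : x ∈ A
    · exact ⟨A, Finset.mem_filter.2 ⟨hA, hxA⟩,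
        Finset.mem_image.2 ⟨x, hx, Finset.insert_erase hxA⟩⟩
    have h2 : ¬ ∀ z ∈ A, ∃ E ∈ F, E ∩ A.erase z = ∅ :=
      fun h => hAM (Finset.mem_filter.2 ⟨hA, h⟩)
    push Not at h2
    obtain ⟨z, hz, hE⟩ := h2
    have hxe : x ∉ A.erase z := fun h => hxA (Finset.mem_of_mem_erase h)
    refine ⟨insert x (A.erase z), Finset.mem_filter.2 ⟨?_, Finset.mem_insert_self _ _⟩,
      Finset.mem_image.2 ⟨z, (hfam A hA).1 hz, ?_⟩⟩
    · by_contra hG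
      obtain ⟨E, hEF, hEe⟩ := hmax.2 (insert x (A.erase z))
        (Finset.insert_subset hx ((Finset.erase_subset _ _).trans (hfam A hA).1))
        (by rw [Finset.card_insert_of_notMem hxe, Finset.card_erase_add_one hz, (hfam A hA).2]) hG
      obtain ⟨e, he⟩ := hE E hEF
      have : e ∈ E ∩ insert x (A.erase z) :=
        Finset.inter_subset_inter_left (Finset.subset_insert _ _) he
      rw [hEe] at this
      simp at this
    · rw [Finset.erase_insert hxe, Finset.insert_erase hz]
  calc F.card ≤ _ := Finset.card_le_card hsub
    _ ≤ _ := Finset.card_union_le _ _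
    _ ≤ degree F x * n + r ^ r := by
      refine Nat.add_le_add (Finset.card_biUnion_le_card_mul _ _ _ (fun B _ => ?_)) hMc
      exact Finset.card_image_le.trans (by simp)

/-- For a maximal intersecting family `F` of `r`-subsets of `[n]` with
`∪F = [n]`, the ratio of maximum to minimum degree is at most `n + r^r`. -/
theorem maxDeg_le_minDeg_mul (n r : ℕ) (hr : 1 ≤ r) (hrn : r ≤ n)
    (F : Finset (Finset ℕ)) (hfam : IsFamily n r F)
    (hmax : IsMaxIntersecting n r F) (hcov : Covers n F) :
    maxDeg n F ≤ (n + r ^ r) * minDeg n F := by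
  have hne : (degree F '' Set.Icc 1 n).Nonempty :=
    Set.Nonempty.image _ ⟨1, by simp; omega⟩
  obtain ⟨x, hx, hxd⟩ : minDeg n F ∈ degree F '' Set.Icc 1 n := Nat.sInf_mem hne
  have hx' : x ∈ Finset.Icc 1 n := by simpa using hx
  rw [← hxd]
  refine csSup_le hne ?_
  rintro _ ⟨y, _, rfl⟩
  have hpos : 1 ≤ degree F x := by
    obtain ⟨A, hA, hxA⟩ := hcov x hx'
    exact Finset.card_pos.2 ⟨A, Finset.mem_filter.2 ⟨hA, hxA⟩⟩
  have h1 : degree F y ≤ F.card := Finset.card_filter_le _ _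
  have h2 := card_le_degree n r F hfam hmax x hx'
  have h3 : r ^ r * 1 ≤ r ^ r * degree F x := Nat.mul_le_mul_left _ hpos
  calc degree F y ≤ degree F x * n + r ^ r := h1.trans h2
    _ ≤ (n + r ^ r) * degree F x := by linarith
end

section
/- Let n, r be integers with r ≥ 3 and 2r + 2 < n. Then there exists a maximal intersecting family F of r-element subsets of [n] with ∪F = [n] such that Δ(F) · binom(2r−3, r−2) ≥ (n − 2r + 3) · binom(2r−3, r−2) · δ(F) − (n − 2r + 2) · δ(F); equivalently, Δ(F)/δ(F) ≥ n − 2r + 3 − (n − 2r + 2)/binom(2r−3, r−2). -/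
/-- The core `T = {2,…,2r-2}`. -/
def coreT (r : ℕ) : Finset ℕ := Finset.Icc 2 (2 * r - 2)

/-- The family: `r`-subsets of `T`, and `r`-sets through `1` with at least `r-2` elements in `T`. -/
def famF (n r : ℕ) : Finset (Finset ℕ) :=
  ((Finset.Icc 1 n).powersetCard r).filter
    (fun G => (1 ∉ G ∧ G ⊆ coreT r) ∨ (1 ∈ G ∧ r - 2 ≤ (G ∩ coreT r).card))

lemma mem_famF {n r : ℕ} {G : Finset ℕ} : G ∈ famF n r ↔
    (G ⊆ Finset.Icc 1 n ∧ G.card = r) ∧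
      ((1 ∉ G ∧ G ⊆ coreT r) ∨ (1 ∈ G ∧ r - 2 ≤ (G ∩ coreT r).card)) := by
  simp [famF, Finset.mem_powersetCard]

lemma card_coreT {r : ℕ} (hr : 3 ≤ r) : (coreT r).card = 2 * r - 3 := by
  simp [coreT]; omega

lemma one_notMem_coreT (r : ℕ) : 1 ∉ coreT r := by simp [coreT]

lemma inter_of_card {T A B : Finset ℕ} (hA : A ⊆ T) (hB : B ⊆ T)
    (h : T.card < A.card + B.card) : (A ∩ B).Nonempty := by
  rw [← Finset.card_pos]
  have h1 := Finset.card_union_add_card_inter A B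
  have h2 := Finset.card_le_card (Finset.union_subset hA hB)
  omega

lemma famF_intersecting {n r : ℕ} (hr : 3 ≤ r) : IsIntersecting (famF n r) := by
  intro A hA B hB
  rw [mem_famF] at hA hB
  have hT := card_coreT hr
  obtain ⟨⟨-, hAc⟩, hA⟩ := hA
  obtain ⟨⟨-, hBc⟩, hB⟩ := hB
  rcases hA with ⟨hA1, hAT⟩ | ⟨hA1, hAT⟩ <;> rcases hB with ⟨hB1, hBT⟩ | ⟨hB1, hBT⟩
  · exact inter_of_card hAT hBT (by omega)
  · refine (inter_of_card hAT (Finset.inter_subset_right (s₁ := B)) (by omega)).mono ?_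
    exact Finset.inter_subset_inter_left Finset.inter_subset_left
  · refine (inter_of_card (Finset.inter_subset_right (s₁ := A)) hBT (by omega)).mono ?_
    exact Finset.inter_subset_inter_right Finset.inter_subset_left
  · exact ⟨1, by simp [hA1, hB1]⟩

lemma coreT_sub {n r : ℕ} (hn : 2 * r + 2 < n) : coreT r ⊆ Finset.Icc 1 n := by
  intro x hx
  simp only [coreT, Finset.mem_Icc] at *
  omega

lemma star_mem {n r y : ℕ} {C : Finset ℕ} (hr : 3 ≤ r) (hn : 2 * r + 2 < n)
    (hC : C ⊆ coreT r) (hCc : C.card = r - 2) (hy : y ∈ Finset.Icc 2 n) (hyC : y ∉ C) :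
    insert 1 (insert y C) ∈ famF n r := by
  have h1C : 1 ∉ C := fun h => one_notMem_coreT r (hC h)
  have hy' := Finset.mem_Icc.1 hy
  rw [mem_famF]
  refine ⟨⟨?_, ?_⟩, Or.inr ⟨by simp, ?_⟩⟩
  · intro z hz
    simp only [Finset.mem_insert] at hz
    rcases hz with rfl | rfl | hz
    · simp; omega
    · simp; omega
    · exact coreT_sub hn (hC hz)
  · rw [Finset.card_insert_of_notMem, Finset.card_insert_of_notMem hyC]
    · omega
    · simp only [Finset.mem_insert, not_or]
      exact ⟨by omega, h1C⟩
  · rw [← hCc]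
    apply Finset.card_le_card
    intro z hz
    simp [hz, hC hz]

lemma famF_maximal {n r : ℕ} (hr : 3 ≤ r) (hn : 2 * r + 2 < n) (G : Finset ℕ)
    (hG : G ⊆ Finset.Icc 1 n) (hGc : G.card = r) (hGF : G ∉ famF n r) :
    ∃ A ∈ famF n r, A ∩ G = ∅ := by
  have hT := card_coreT hr
  have hsplit := Finset.card_sdiff_add_card_inter (coreT r) G
  rw [Finset.inter_comm] at hsplit
  by_cases h1 : 1 ∈ G
  · have hlt : (G ∩ coreT r).card < r - 2 := by
      by_contra h
      exact hGF (mem_famF.2 ⟨⟨hG, hGc⟩, Or.inr ⟨h1, by omega⟩⟩)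
    obtain ⟨A, hA, hAc⟩ := Finset.exists_subset_card_eq (s := coreT r \ G) (n := r) (by omega)
    have hAT : A ⊆ coreT r := hA.trans Finset.sdiff_subset
    refine ⟨A, mem_famF.2 ⟨⟨hAT.trans (coreT_sub hn), hAc⟩, Or.inl
      ⟨fun h => one_notMem_coreT r (hAT h), hAT⟩⟩, ?_⟩
    rw [← Finset.disjoint_iff_inter_eq_empty]
    exact Finset.disjoint_of_subset_left hA Finset.sdiff_disjoint
  · have hlt : (G ∩ coreT r).card < r := by
      by_contra h
      have : G ∩ coreT r = G := Finset.eq_of_subset_of_card_le Finset.inter_subset_left (by omega)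
      exact hGF (mem_famF.2 ⟨⟨hG, hGc⟩, Or.inl ⟨h1, Finset.inter_eq_left.1 this⟩⟩)
    obtain ⟨C, hC, hCc⟩ := Finset.exists_subset_card_eq (s := coreT r \ G) (n := r - 2) (by omega)
    have hCT : C ⊆ coreT r := hC.trans Finset.sdiff_subset
    have : 0 < (Finset.Icc 2 n \ (G ∪ C)).card := by
      have h2 := Finset.le_card_sdiff (G ∪ C) (Finset.Icc 2 n)
      have h3 := Finset.card_union_le G C
      simp only [Nat.card_Icc] at h2
      omega
    obtain ⟨y, hy⟩ := Finset.card_pos.1 this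
    simp only [Finset.mem_sdiff, Finset.mem_union, not_or] at hy
    refine ⟨_, star_mem hr hn hCT hCc hy.1 hy.2.2, ?_⟩
    ext z
    simp only [Finset.mem_inter, Finset.mem_insert, Finset.notMem_empty, iff_false, not_and]
    rintro (rfl | rfl | hz)
    · exact h1
    · exact hy.2.1
    · exact (Finset.mem_sdiff.1 (hC hz)).2

lemma famF_covers {n r : ℕ} (hr : 3 ≤ r) (hn : 2 * r + 2 < n) : Covers n (famF n r) := by
  have hT := card_coreT hr
  have key : ∀ z ∈ Finset.Icc 2 n, ∃ A ∈ famF n r, 1 ∈ A ∧ z ∈ A := by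
    intro z hz
    obtain ⟨C, hC, hCc⟩ := Finset.exists_subset_card_eq (s := (coreT r).erase z) (n := r - 2)
      (by have := Finset.pred_card_le_card_erase (s := coreT r) (a := z); omega)
    refine ⟨_, star_mem hr hn (hC.trans (Finset.erase_subset _ _)) hCc hz
      (fun h => by simpa using hC h), by simp, by simp⟩
  intro x hx
  rw [Finset.mem_Icc] at hx
  by_cases h : x = 1
  · obtain ⟨A, hA, h1, -⟩ := key 2 (by simp; omega)
    exact ⟨A, hA, h ▸ h1⟩
  · obtain ⟨A, hA, -, h1⟩ := key x (by simp; omega)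
    exact ⟨A, hA, h1⟩

lemma degree_last {n r : ℕ} (hr : 3 ≤ r) (hn : 2 * r + 2 < n) :
    degree (famF n r) n ≤ Nat.choose (2 * r - 3) (r - 2) := by
  have hT := card_coreT hr
  have hnT : n ∉ coreT r := by simp [coreT]; omega
  have key : ∀ G ∈ (famF n r).filter (fun A => n ∈ A),
      (G ∩ coreT r).card = r - 2 ∧ G = insert 1 (insert n (G ∩ coreT r)) := by
    intro G hG
    rw [Finset.mem_filter, mem_famF] at hG
    obtain ⟨⟨⟨-, hGc⟩, h⟩, hnG⟩ := hG
    rcases h with ⟨-, h⟩ | ⟨h1, h⟩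
    · exact absurd (h hnG) hnT
    have hsub : insert 1 (insert n (G ∩ coreT r)) ⊆ G := by
      intro z hz
      simp only [Finset.mem_insert, Finset.mem_inter] at hz
      rcases hz with rfl | rfl | hz
      exacts [h1, hnG, hz.1]
    have hc : (insert 1 (insert n (G ∩ coreT r))).card = (G ∩ coreT r).card + 2 := by
      rw [Finset.card_insert_of_notMem, Finset.card_insert_of_notMem]
      · simp [hnT]
      · simp only [Finset.mem_insert, Finset.mem_inter, not_or]
        exact ⟨by omega, fun h => one_notMem_coreT r h.2⟩
    have hle := Finset.card_le_card hsub
    exact ⟨by omega, (Finset.eq_of_subset_of_card_le hsub (by omega)).symm⟩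
  rw [← hT, ← Finset.card_powersetCard]
  unfold degree
  apply Finset.card_le_card_of_injOn (fun G => G ∩ coreT r)
  · intro G hG
    simp only [Finset.mem_coe, Finset.mem_powersetCard]
    exact ⟨Finset.inter_subset_right, (key G hG).1⟩
  · intro G hG H hH h
    rw [(key G hG).2, (key H hH).2]
    simp only at h
    rw [h]

lemma degree_one {n r : ℕ} (hr : 3 ≤ r) (hn : 2 * r + 2 < n) :
    (n - 2 * r + 3) * Nat.choose (2 * r - 3) (r - 2) ≤ degree (famF n r) 1 := by
  have hT := card_coreT hr
  have hsym : Nat.choose (2 * r - 3) (r - 2) = Nat.choose (2 * r - 3) (r - 1) :=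
    Nat.choose_symm_of_eq_add (by omega)
  have hout : ∀ y ∈ Finset.Icc (2 * r - 1) n, y ∉ coreT r ∧ y ≠ 1 ∧ y ∈ Finset.Icc 2 n := by
    intro y hy
    simp only [Finset.mem_Icc, coreT] at *
    omega
  set P := (coreT r).powersetCard (r - 2) ×ˢ Finset.Icc (2 * r - 1) n with hP
  set I := P.image (fun p => insert 1 (insert p.2 p.1)) with hI
  set J := ((coreT r).powersetCard (r - 1)).image (insert 1) with hJ
  have hIc : I.card = Nat.choose (2 * r - 3) (r - 2) * (n + 1 - (2 * r - 1)) := by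
    rw [hI, Finset.card_image_of_injOn, hP, Finset.card_product, Finset.card_powersetCard, hT,
      Nat.card_Icc]
    rintro ⟨C, y⟩ h ⟨D, z⟩ h' he
    simp only [hP, Finset.mem_coe, Finset.mem_product, Finset.mem_powersetCard] at h h'
    obtain ⟨hy1, hy2, -⟩ := hout y h.2
    obtain ⟨hz1, hz2, -⟩ := hout z h'.2
    simp only at he
    have e : ∀ w (E : Finset ℕ), E ⊆ coreT r → w ∉ coreT r →
        insert 1 (insert w E) ∩ coreT r = E := by
      intro w E hE hw
      ext u
      have := one_notMem_coreT r
      simp only [Finset.mem_inter, Finset.mem_insert]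
      constructor
      · rintro ⟨rfl | rfl | h, h2⟩
        · exact absurd h2 this
        · exact absurd h2 hw
        · exact h
      · intro h
        exact ⟨Or.inr (Or.inr h), hE h⟩
    have hCD : C = D := by rw [← e y C h.1.1 hy1, he, e z D h'.1.1 hz1]
    have : y ∈ insert 1 (insert z D) := by rw [← he]; simp
    simp only [Finset.mem_insert] at this
    rcases this with h3 | h3 | h3
    · exact absurd h3 hy2
    · rw [hCD, h3]
    · exact absurd (h'.1.1 h3) hy1
  have hJc : J.card = Nat.choose (2 * r - 3) (r - 2) := by
    rw [hsym, hJ, Finset.card_image_of_injOn, Finset.card_powersetCard, hT]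
    intro C hC D hD he
    simp only [Finset.mem_coe, Finset.mem_powersetCard] at hC hD
    have h1C : 1 ∉ C := fun h => one_notMem_coreT r (hC.1 h)
    have h1D : 1 ∉ D := fun h => one_notMem_coreT r (hD.1 h)
    rw [← Finset.erase_insert h1C, he, Finset.erase_insert h1D]
  have hdisj : Disjoint I J := by
    rw [Finset.disjoint_left]
    intro G hG hG'
    simp only [hI, hJ, hP, Finset.mem_image, Finset.mem_product, Finset.mem_powersetCard] at hG hG'
    obtain ⟨⟨C, y⟩, h, rfl⟩ := hG
    obtain ⟨D, hD, he⟩ := hG'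
    obtain ⟨hy1, hy2, -⟩ := hout y h.2
    have : y ∈ insert 1 D := by rw [he]; simp
    rcases Finset.mem_insert.1 this with h3 | h3
    · exact hy2 h3
    · exact hy1 (hD.1 h3)
  have hsub : I ∪ J ⊆ (famF n r).filter (fun A => 1 ∈ A) := by
    intro G hG
    rw [Finset.mem_union] at hG
    rw [Finset.mem_filter]
    rcases hG with hG | hG
    · simp only [hI, hP, Finset.mem_image, Finset.mem_product, Finset.mem_powersetCard] at hG
      obtain ⟨⟨C, y⟩, h, rfl⟩ := hG
      obtain ⟨hy1, hy2, hy3⟩ := hout y h.2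
      exact ⟨star_mem hr hn h.1.1 h.1.2 hy3 (fun h4 => hy1 (h.1.1 h4)), by simp⟩
    · simp only [hJ, Finset.mem_image, Finset.mem_powersetCard] at hG
      obtain ⟨D, hD, rfl⟩ := hG
      obtain ⟨z, hz⟩ : D.Nonempty := by rw [← Finset.card_pos]; omega
      have hzT := Finset.mem_Icc.1 (hD.1 hz)
      have := star_mem (n := n) (y := z) (C := D.erase z) hr hn
        ((Finset.erase_subset _ _).trans hD.1)
        (by rw [Finset.card_erase_of_mem hz]; omega) (by rw [Finset.mem_Icc]; omega) (by simp)
      rw [Finset.insert_erase hz] at this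
      exact ⟨this, by simp⟩
  have hle := Finset.card_le_card hsub
  rw [Finset.card_union_of_disjoint hdisj, hIc, hJc] at hle
  unfold degree
  refine le_trans (le_of_eq ?_) hle
  have : n + 1 - (2 * r - 1) = n - 2 * r + 2 := by omega
  rw [this]
  ring

/-- For `r ≥ 3` and `2r + 2 < n` there is a maximal intersecting family `F`
of `r`-subsets of `[n]` with `∪F = [n]` such that
`Δ(F)·C(2r−3, r−2) ≥ (n−2r+3)·C(2r−3, r−2)·δ(F) − (n−2r+2)·δ(F)`
(stated additively to avoid truncated subtraction of the two sides). -/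
theorem exists_unbalanced_family (n r : ℕ) (hr : 3 ≤ r) (hn : 2 * r + 2 < n) :
    ∃ F : Finset (Finset ℕ), IsFamily n r F ∧ IsMaxIntersecting n r F ∧ Covers n F ∧
      (n - 2 * r + 3) * Nat.choose (2 * r - 3) (r - 2) * minDeg n F ≤
        maxDeg n F * Nat.choose (2 * r - 3) (r - 2) + (n - 2 * r + 2) * minDeg n F := by
  refine ⟨famF n r, fun A hA => (mem_famF.1 hA).1,
    ⟨famF_intersecting hr, famF_maximal hr hn⟩, famF_covers hr hn, ?_⟩
  have hmin : minDeg n (famF n r) ≤ Nat.choose (2 * r - 3) (r - 2) :=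
    (Nat.sInf_le (Set.mem_image_of_mem (degree (famF n r))
      (Set.mem_Icc.2 ⟨by omega, le_refl n⟩))).trans (degree_last hr hn)
  have hmax : (n - 2 * r + 3) * Nat.choose (2 * r - 3) (r - 2) ≤ maxDeg n (famF n r) :=
    (degree_one hr hn).trans
      (le_csSup ((Set.finite_Icc 1 n).image _).bddAbove ⟨1, ⟨le_refl 1, by omega⟩, rfl⟩)
  exact (Nat.mul_le_mul hmax hmin).trans (Nat.le_add_right _ _)
end

section
/- Let n, r be positive integers with r ≤ n and let F be an intersecting family of r-element subsets of [n]. Define F₂ = {F ∈ F : for every x ∈ F there exists F′ ∈ F with (F \ {x}) ∩ F′ = ∅}. Then |F₂| ≤ r^r. -/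
theorem card_F2_aux (r : ℕ) (F G : Finset (Finset ℕ)) (hcard : ∀ A ∈ F, A.card = r)
    (hint : ∀ A ∈ F, ∀ B ∈ F, (A ∩ B).Nonempty)
    (hG : ∀ A ∈ G, A ∈ F ∧ ∀ x ∈ A, ∃ B ∈ F, (A \ {x}) ∩ B = ∅) (k : ℕ) :
    ∀ S : Finset ℕ, S.card + k = r → (G.filter (fun A => S ⊆ A)).card ≤ r ^ k := by
  induction k with
  | zero =>
    intro S hS
    rw [pow_zero, Finset.card_le_one]
    have key : ∀ A ∈ G.filter (fun A => S ⊆ A), S = A := by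
      intro A hA
      rw [Finset.mem_filter] at hA
      refine Finset.eq_of_subset_of_card_le hA.2 ?_
      rw [hcard A (hG A hA.1).1]
      omega
    intro A hA B hB
    rw [← key A hA, ← key B hB]
  | succ k ih =>
    intro S hS
    rcases (G.filter (fun A => S ⊆ A)).eq_empty_or_nonempty with h0 | ⟨A, hA⟩
    · simp [h0]
    rw [Finset.mem_filter] at hA
    obtain ⟨hAF, hAx⟩ := hG A hA.1
    have hAc := hcard A hAF
    obtain ⟨x, hxA, hxS⟩ := Finset.exists_mem_notMem_of_card_lt_card
      (show S.card < A.card by omega)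
    obtain ⟨B, hBF, hB⟩ := hAx x hxA
    have hSB : ∀ y ∈ B, y ∉ S := by
      intro y hyB hyS
      have : y ∈ (A \ {x}) ∩ B := by
        simp only [Finset.mem_inter, Finset.mem_sdiff, Finset.mem_singleton]
        exact ⟨⟨hA.2 hyS, fun h => hxS (h ▸ hyS)⟩, hyB⟩
      rw [hB] at this
      simp at this
    have hsub : G.filter (fun A => S ⊆ A) ⊆
        B.biUnion (fun y => G.filter (fun A => insert y S ⊆ A)) := by
      intro C hC
      rw [Finset.mem_filter] at hC
      obtain ⟨y, hy⟩ := hint C (hG C hC.1).1 B hBF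
      rw [Finset.mem_inter] at hy
      rw [Finset.mem_biUnion]
      exact ⟨y, hy.2, Finset.mem_filter.2 ⟨hC.1, Finset.insert_subset hy.1 hC.2⟩⟩
    calc _ ≤ _ := Finset.card_le_card hsub
      _ ≤ B.card * r ^ k := by
        apply Finset.card_biUnion_le_card_mul
        intro y hy
        apply ih
        rw [Finset.card_insert_of_notMem (hSB y hy)]
        omega
      _ = r ^ (k + 1) := by rw [hcard B hBF, pow_succ, mul_comm]

/-- For an intersecting family `F` of `r`-subsets of `[n]`, the subfamily
`F₂ = {F ∈ F : ∀ x ∈ F, ∃ F' ∈ F, (F \ {x}) ∩ F' = ∅}` has at most `r^r` members. -/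
theorem card_F2_le_pow (n r : ℕ) (hr : 1 ≤ r) (hrn : r ≤ n)
    (F : Finset (Finset ℕ)) (hfam : IsFamily n r F) (hint : IsIntersecting F) :
    (F.filter (fun A => ∀ x ∈ A, ∃ B ∈ F, (A \ {x}) ∩ B = ∅)).card ≤ r ^ r := by
  have h := card_F2_aux r F (F.filter (fun A => ∀ x ∈ A, ∃ B ∈ F, (A \ {x}) ∩ B = ∅))
    (fun A hA => (hfam A hA).2) hint (fun A hA => Finset.mem_filter.1 hA) r ∅ (by simp)
  simpa using h
end

section
/- Let n, r be positive integers with r ≤ n and let F be a nonempty intersecting family of r-element subsets of [n] whose covering number equals r, i.e., every subset T of [n] with |T| ≤ r − 1 is disjoint from some member of F. Then |F| ≤ r^r. -/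
theorem card_filter_superset_le (n r : ℕ)
    (F : Finset (Finset ℕ)) (hfam : IsFamily n r F)
    (hint : IsIntersecting F)
    (hcov : ∀ T ⊆ Finset.Icc 1 n, T.card ≤ r - 1 → ∃ A ∈ F, A ∩ T = ∅) (k : ℕ) :
    ∀ T ⊆ Finset.Icc 1 n, T.card + k = r → (F.filter (fun A => T ⊆ A)).card ≤ r ^ k := by
  induction k with
  | zero =>
    intro T _ hc
    have h : ∀ A ∈ F.filter (fun A => T ⊆ A), A = T := by
      intro A hA
      rw [Finset.mem_filter] at hA
      exact (Finset.eq_of_subset_of_card_le hA.2 (by rw [(hfam A hA.1).2]; omega)).symm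
    rw [pow_zero, Finset.card_le_one]
    intro a ha b hb
    rw [h a ha, h b hb]
  | succ k ih =>
    intro T hT hc
    obtain ⟨B, hB, hBT⟩ := hcov T hT (by omega)
    have hsub : F.filter (fun A => T ⊆ A) ⊆
        B.biUnion (fun x => F.filter (fun A => insert x T ⊆ A)) := by
      intro A hA
      rw [Finset.mem_filter] at hA
      obtain ⟨x, hx⟩ := hint A hA.1 B hB
      rw [Finset.mem_inter] at hx
      rw [Finset.mem_biUnion]
      exact ⟨x, hx.2, Finset.mem_filter.2 ⟨hA.1, Finset.insert_subset hx.1 hA.2⟩⟩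
    refine (Finset.card_le_card hsub).trans ?_
    refine (Finset.card_biUnion_le_card_mul B _ (r ^ k) ?_).trans ?_
    · intro x hx
      have hxT : x ∉ T := by
        intro h
        have : x ∈ B ∩ T := Finset.mem_inter.2 ⟨hx, h⟩
        rw [hBT] at this
        simp at this
      apply ih
      · exact Finset.insert_subset ((hfam B hB).1 hx) hT
      · rw [Finset.card_insert_of_notMem hxT]; omega
    · rw [(hfam B hB).2, pow_succ, mul_comm]

/-- A nonempty intersecting family `F` of `r`-subsets of `[n]` with covering
number `r` (every set of size at most `r − 1` misses some member of `F`) has at most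
`r^r` members. -/
theorem card_le_pow_of_covering_number_eq (n r : ℕ) (hr : 1 ≤ r) (hrn : r ≤ n)
    (F : Finset (Finset ℕ)) (hne : F.Nonempty) (hfam : IsFamily n r F)
    (hint : IsIntersecting F)
    (hcov : ∀ T ⊆ Finset.Icc 1 n, T.card ≤ r - 1 → ∃ A ∈ F, A ∩ T = ∅) :
    F.card ≤ r ^ r := by
  simpa using card_filter_superset_le n r F hfam hint hcov r ∅ (by simp) (by simp)
end

section
/- Let n, r be positive integers with r ≤ n, let F be a maximal intersecting family of r-element subsets of [n], and let y ∈ [n]. Define F₁ = {F ∈ F : there exists x ∈ F such that (F \ {x}) ∩ F′ ≠ ∅ for every F′ ∈ F}. Then |F₁| ≤ (n − r + 1) · d_F(y), where d_F(y) is the number of members of F containing y. -/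
/-- For a maximal intersecting family `F` of `r`-subsets of `[n]` and any
`y ∈ [n]`, the subfamily `F₁ = {F ∈ F : ∃ x ∈ F, ∀ F' ∈ F, (F \ {x}) ∩ F' ≠ ∅}`
has at most `(n − r + 1)·d_F(y)` members. -/
theorem card_F1_le (n r : ℕ) (hr : 1 ≤ r) (hrn : r ≤ n)
    (F : Finset (Finset ℕ)) (hfam : IsFamily n r F) (hmax : IsMaxIntersecting n r F)
    (y : ℕ) (hy : y ∈ Finset.Icc 1 n) :
    (F.filter (fun A => ∃ x ∈ A, ∀ B ∈ F, ((A \ {x}) ∩ B).Nonempty)).card ≤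
      (n - r + 1) * degree F y := by
  classical
  have hsub : F.filter (fun A => ∃ x ∈ A, ∀ B ∈ F, ((A \ {x}) ∩ B).Nonempty) ⊆
      (F.filter (fun A => y ∈ A)).biUnion
        (fun B => (Finset.Icc 1 n \ B.erase y).image (fun x => insert x (B.erase y))) := by
    intro A hA
    rw [Finset.mem_filter] at hA
    obtain ⟨hAF, x, hxA, hx⟩ := hA
    obtain ⟨hAn, hAr⟩ := hfam A hAF
    simp only [Finset.mem_biUnion, Finset.mem_image, Finset.mem_filter, Finset.mem_sdiff]
    by_cases hyA : y ∈ A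
    · exact ⟨A, ⟨hAF, hyA⟩, y, ⟨hy, by simp⟩, Finset.insert_erase hyA⟩
    · have hyE : y ∉ A.erase x := fun h => hyA (Finset.mem_of_mem_erase h)
      refine ⟨insert y (A.erase x), ⟨?_, Finset.mem_insert_self _ _⟩, x, ⟨hAn hxA, ?_⟩, ?_⟩
      · by_contra hG
        obtain ⟨B, hB, hBe⟩ := hmax.2 (insert y (A.erase x))
          (Finset.insert_subset hy ((Finset.erase_subset _ _).trans hAn))
          (by rw [Finset.card_insert_of_notMem hyE, Finset.card_erase_of_mem hxA]; omega) hG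
        obtain ⟨z, hz⟩ := hx B hB
        have : z ∈ B ∩ insert y (A.erase x) := by
          simp only [Finset.mem_inter, Finset.mem_sdiff, Finset.mem_singleton,
            Finset.mem_insert, Finset.mem_erase] at hz ⊢
          tauto
        rw [hBe] at this
        simp at this
      · rw [Finset.erase_insert hyE]; simp
      · rw [Finset.erase_insert hyE, Finset.insert_erase hxA]
  refine (Finset.card_le_card hsub).trans ?_
  rw [mul_comm]
  refine Finset.card_biUnion_le_card_mul _ _ _ ?_
  intro B hB
  rw [Finset.mem_filter] at hB
  obtain ⟨hBn, hBr⟩ := hfam B hB.1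
  refine Finset.card_image_le.trans ?_
  rw [Finset.card_sdiff_of_subset ((Finset.erase_subset _ _).trans hBn),
    Finset.card_erase_of_mem hB.2, Nat.card_Icc]
  omega
end

section
/- Let n, r be integers with r ≥ 3 and 2r + 2 < n. Set S = {2, 3, …, 2r−2} and S₀ = {2, 3, …, r−1}, and define F₁ = {{1} ∪ G : G an (r−1)-element subset of S}, F₂ = {{1, i} ∪ H : 2r−1 ≤ i ≤ n, H an (r−2)-element subset of S with H ≠ S₀}, F₃ = the family of all r-element subsets of S, F₄ = {(S \ S₀) ∪ {i} : 2r−1 ≤ i ≤ n}, and F = F₁ ∪ F₂ ∪ F₃ ∪ F₄. Then F is a maximal intersecting family of r-element subsets of [n]. -/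
/-- `S = {2, …, 2r−2}`. -/
def Sset (r : ℕ) : Finset ℕ := Finset.Icc 2 (2 * r - 2)

/-- `S₀ = {2, …, r−1}`. -/
def S0set (r : ℕ) : Finset ℕ := Finset.Icc 2 (r - 1)

/-- `F₁ = {{1} ∪ G : G ∈ binom(S, r−1)}`. -/
def Fam1 (r : ℕ) : Finset (Finset ℕ) :=
  ((Sset r).powersetCard (r - 1)).image (fun G => insert 1 G)

/-- `F₂ = {{1, i} ∪ H : 2r−1 ≤ i ≤ n, H ∈ binom(S, r−2), H ≠ S₀}`. -/
def Fam2 (n r : ℕ) : Finset (Finset ℕ) :=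
  ((Finset.Icc (2 * r - 1) n) ×ˢ
      (((Sset r).powersetCard (r - 2)).filter (fun H => H ≠ S0set r))).image
    (fun p => insert 1 (insert p.1 p.2))

/-- `F₃ = binom(S, r)`. -/
def Fam3 (r : ℕ) : Finset (Finset ℕ) := (Sset r).powersetCard r

/-- `F₄ = {(S \ S₀) ∪ {i} : 2r−1 ≤ i ≤ n}`. -/
def Fam4 (n r : ℕ) : Finset (Finset ℕ) :=
  (Finset.Icc (2 * r - 1) n).image (fun i => insert i (Sset r \ S0set r))

/-- `F = F₁ ∪ F₂ ∪ F₃ ∪ F₄`. -/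
def FamConstr (n r : ℕ) : Finset (Finset ℕ) := Fam1 r ∪ Fam2 n r ∪ Fam3 r ∪ Fam4 n r

lemma mem_fam {n r : ℕ} {A : Finset ℕ} : A ∈ FamConstr n r ↔
    (∃ G, G ⊆ Sset r ∧ G.card = r - 1 ∧ insert 1 G = A) ∨
    (∃ i H, 2 * r - 1 ≤ i ∧ i ≤ n ∧ H ⊆ Sset r ∧ H.card = r - 2 ∧ H ≠ S0set r ∧
      insert 1 (insert i H) = A) ∨
    (A ⊆ Sset r ∧ A.card = r) ∨
    (∃ i, 2 * r - 1 ≤ i ∧ i ≤ n ∧ insert i (Sset r \ S0set r) = A) := by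
  simp only [FamConstr, Fam1, Fam2, Fam3, Fam4, Finset.mem_union, Finset.mem_image,
    Finset.mem_powersetCard, Finset.mem_product, Finset.mem_filter, Finset.mem_Icc, Prod.exists,
    or_assoc, and_assoc]

lemma mem_S {r x : ℕ} : x ∈ Sset r ↔ 2 ≤ x ∧ x ≤ 2 * r - 2 := by simp [Sset]

lemma card_S {r : ℕ} (hr : 3 ≤ r) : (Sset r).card = 2 * r - 3 := by
  simp [Sset]; omega

lemma S0_sub {r : ℕ} : S0set r ⊆ Sset r := by
  intro x; simp only [S0set, Sset, Finset.mem_Icc]; omega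

lemma card_S0 {r : ℕ} (hr : 3 ≤ r) : (S0set r).card = r - 2 := by
  simp [S0set]; omega

lemma card_T {r : ℕ} (hr : 3 ≤ r) : (Sset r \ S0set r).card = r - 1 := by
  rw [Finset.card_sdiff_of_subset S0_sub, card_S hr, card_S0 hr]; omega

lemma inter_of_card_s5 {S A B : Finset ℕ} (hA : A ⊆ S) (hB : B ⊆ S)
    (h : S.card < A.card + B.card) : ∃ x, x ∈ A ∧ x ∈ B := by
  by_contra hc
  push Not at hc
  have hd : Disjoint A B := Finset.disjoint_left.2 hc
  have := Finset.card_le_card (Finset.union_subset hA hB)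
  rw [Finset.card_union_of_disjoint hd] at this
  omega

lemma inter_T {r : ℕ} (hr : 3 ≤ r) {H : Finset ℕ} (hH : H ⊆ Sset r) (hc : H.card = r - 2)
    (hne : H ≠ S0set r) : ∃ x, x ∈ H ∧ x ∈ Sset r \ S0set r := by
  by_contra h
  push Not at h
  apply hne
  apply Finset.eq_of_subset_of_card_le
  · intro x hx
    have h1 := h x hx
    have h2 := hH hx
    simp only [Finset.mem_sdiff, not_and, not_not] at h1
    exact h1 h2
  · rw [card_S0 hr, hc]

lemma exists_out {n r : ℕ} (hn : 2 * r + 2 < n) {G : Finset ℕ}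
    (h : (G \ Sset r).card ≤ 1 + 1) : ∃ i, 2 * r - 1 ≤ i ∧ i ≤ n ∧ i ∉ G := by
  by_contra hc
  push Not at hc
  have h1 : Finset.Icc (2 * r - 1) n ⊆ G \ Sset r := by
    intro x hx
    rw [Finset.mem_Icc] at hx
    rw [Finset.mem_sdiff, mem_S]
    exact ⟨hc x hx.1 hx.2, by omega⟩
  have := Finset.card_le_card h1
  rw [Nat.card_Icc] at this
  omega

/-- For `r ≥ 3` and `2r + 2 < n`, the family `F = F₁ ∪ F₂ ∪ F₃ ∪ F₄` is a
maximal intersecting family of `r`-element subsets of `[n]`. -/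
theorem famConstr_isMaxIntersecting (n r : ℕ) (hr : 3 ≤ r) (hn : 2 * r + 2 < n) :
    IsFamily n r (FamConstr n r) ∧ IsMaxIntersecting n r (FamConstr n r) := by
  have cS := card_S hr
  have cT := card_T hr
  refine ⟨?_, ?_, ?_⟩
  · intro A hA
    rw [mem_fam] at hA
    rcases hA with ⟨G, hG, hc, rfl⟩ | ⟨i, H, hi, hi', hH, hc, -, rfl⟩ | ⟨hA, hc⟩ | ⟨i, hi, hi', rfl⟩
    · constructor
      · intro x hx
        rw [Finset.mem_insert] at hx
        rw [Finset.mem_Icc]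
        rcases hx with rfl | hx
        · omega
        · have := mem_S.1 (hG hx); omega
      · rw [Finset.card_insert_of_notMem, hc]
        · omega
        · intro h; have := mem_S.1 (hG h); omega
    · constructor
      · intro x hx
        rw [Finset.mem_insert, Finset.mem_insert] at hx
        rw [Finset.mem_Icc]
        rcases hx with rfl | rfl | hx
        · omega
        · omega
        · have := mem_S.1 (hH hx); omega
      · rw [Finset.card_insert_of_notMem, Finset.card_insert_of_notMem, hc]
        · omega
        · intro h; have := mem_S.1 (hH h); omega
        · intro h
          rcases Finset.mem_insert.1 h with h | h
          · omega
          · have := mem_S.1 (hH h); omega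
    · refine ⟨?_, hc⟩
      intro x hx
      have := mem_S.1 (hA hx)
      rw [Finset.mem_Icc]; omega
    · constructor
      · intro x hx
        rw [Finset.mem_insert] at hx
        rw [Finset.mem_Icc]
        rcases hx with rfl | hx
        · omega
        · have := mem_S.1 (Finset.mem_sdiff.1 hx).1; omega
      · rw [Finset.card_insert_of_notMem, cT]
        · omega
        · intro h; have := mem_S.1 (Finset.mem_sdiff.1 h).1; omega
  · have sub : Sset r \ S0set r ⊆ Sset r := Finset.sdiff_subset
    intro A hA B hB
    suffices h : ∃ x, x ∈ A ∧ x ∈ B by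
      obtain ⟨x, h1, h2⟩ := h
      exact ⟨x, Finset.mem_inter.2 ⟨h1, h2⟩⟩
    rw [mem_fam] at hA hB
    rcases hA with ⟨G, hG, hc, rfl⟩ | ⟨i, H, hi, hi', hH, hc, hne, rfl⟩ | ⟨hA, hc⟩ | ⟨i, hi, hi', rfl⟩ <;>
    rcases hB with ⟨G', hG', hc', rfl⟩ | ⟨j, H', hj, hj', hH', hc', hne', rfl⟩ | ⟨hB, hc'⟩ | ⟨j, hj, hj', rfl⟩
    · exact ⟨1, by simp, by simp⟩
    · exact ⟨1, by simp, by simp⟩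
    · obtain ⟨x, h1, h2⟩ := inter_of_card_s5 hG hB (by omega)
      exact ⟨x, by simp [h1], h2⟩
    · obtain ⟨x, h1, h2⟩ := inter_of_card_s5 hG sub (by omega)
      exact ⟨x, Finset.mem_insert_of_mem h1, Finset.mem_insert_of_mem h2⟩
    · exact ⟨1, by simp, by simp⟩
    · exact ⟨1, by simp, by simp⟩
    · obtain ⟨x, h1, h2⟩ := inter_of_card_s5 hH hB (by omega)
      exact ⟨x, by simp [h1], h2⟩
    · obtain ⟨x, h1, h2⟩ := inter_T hr hH hc hne
      exact ⟨x, by simp [h1], Finset.mem_insert_of_mem h2⟩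
    · obtain ⟨x, h1, h2⟩ := inter_of_card_s5 hA hG' (by omega)
      exact ⟨x, h1, by simp [h2]⟩
    · obtain ⟨x, h1, h2⟩ := inter_of_card_s5 hA hH' (by omega)
      exact ⟨x, h1, by simp [h2]⟩
    · exact inter_of_card_s5 hA hB (by omega)
    · obtain ⟨x, h1, h2⟩ := inter_of_card_s5 hA sub (by omega)
      exact ⟨x, h1, Finset.mem_insert_of_mem h2⟩
    · obtain ⟨x, h1, h2⟩ := inter_of_card_s5 sub hG' (by omega)
      exact ⟨x, Finset.mem_insert_of_mem h1, by simp [h2]⟩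
    · obtain ⟨x, h1, h2⟩ := inter_T hr hH' hc' hne'
      exact ⟨x, Finset.mem_insert_of_mem h2, by simp [h1]⟩
    · obtain ⟨x, h1, h2⟩ := inter_of_card_s5 sub hB (by omega)
      exact ⟨x, Finset.mem_insert_of_mem h1, h2⟩
    · obtain ⟨x, h1, h2⟩ := inter_of_card_s5 sub sub (by omega)
      exact ⟨x, Finset.mem_insert_of_mem h1, Finset.mem_insert_of_mem h2⟩
  · intro G hG hc hGF
    suffices h : ∃ A ∈ FamConstr n r, ∀ x ∈ A, x ∉ G by
      obtain ⟨A, h1, h2⟩ := h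
      exact ⟨A, h1, Finset.disjoint_iff_inter_eq_empty.1 (Finset.disjoint_left.2 h2)⟩
    have e1 : (G ∩ Sset r).card + (G \ Sset r).card = G.card := Finset.card_inter_add_card_sdiff G (Sset r)
    have e2 : (Sset r ∩ G).card + (Sset r \ G).card = (Sset r).card :=
      Finset.card_inter_add_card_sdiff (Sset r) G
    rw [Finset.inter_comm] at e2
    have one : (1 : ℕ) ∉ Sset r := by rw [mem_S]; omega
    have hsub : G ∩ Sset r ⊆ Sset r := Finset.inter_subset_right
    have hsub' : G ∩ Sset r ⊆ G := Finset.inter_subset_left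
    have hdsub : Sset r \ G ⊆ Sset r := Finset.sdiff_subset
    have dS : ∀ x ∈ Sset r \ G, x ∉ G := fun x hx => (Finset.mem_sdiff.1 hx).2
    by_cases h1 : 1 ∈ G
    · have h1' : 1 ∈ G \ Sset r := Finset.mem_sdiff.2 ⟨h1, one⟩
      have hpos := Finset.card_pos.2 ⟨1, h1'⟩
      have e3 := Finset.card_erase_of_mem h1'
      by_cases ht : (G ∩ Sset r).card = r - 1
      · exfalso
        apply hGF
        refine mem_fam.2 (Or.inl ⟨G ∩ Sset r, hsub, ht, ?_⟩)
        apply Finset.eq_of_subset_of_card_le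
        · exact Finset.insert_subset h1 hsub'
        · rw [Finset.card_insert_of_notMem (fun h => one (hsub h))]; omega
      by_cases ht2 : (G ∩ Sset r).card = r - 2
      · have h0 : G ∩ Sset r = S0set r := by
          by_contra hne
          apply hGF
          obtain ⟨i, hi⟩ : ((G \ Sset r).erase 1).Nonempty := by
            rw [← Finset.card_pos]; omega
          rw [Finset.mem_erase, Finset.mem_sdiff, mem_S] at hi
          have hi2 := Finset.mem_Icc.1 (hG hi.2.1)
          refine mem_fam.2 (Or.inr (Or.inl ⟨i, G ∩ Sset r, by omega, by omega, hsub, ht2, hne, ?_⟩))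
          apply Finset.eq_of_subset_of_card_le
          · exact Finset.insert_subset h1 (Finset.insert_subset hi.2.1 hsub')
          · rw [Finset.card_insert_of_notMem, Finset.card_insert_of_notMem]
            · omega
            · intro h; have := mem_S.1 (hsub h); omega
            · intro h
              rcases Finset.mem_insert.1 h with h | h
              · omega
              · exact one (hsub h)
        obtain ⟨i, hi, hi', hiG⟩ := exists_out (r := r) (G := G) hn (by omega)
        refine ⟨_, mem_fam.2 (Or.inr (Or.inr (Or.inr ⟨i, hi, hi', rfl⟩))), ?_⟩
        intro x hx hxG
        rcases Finset.mem_insert.1 hx with rfl | hx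
        · exact hiG hxG
        · rw [Finset.mem_sdiff] at hx
          exact hx.2 (h0 ▸ Finset.mem_inter.2 ⟨hxG, hx.1⟩)
      · obtain ⟨A, hA, hAc⟩ := Finset.exists_subset_card_eq (s := Sset r \ G) (n := r) (by omega)
        exact ⟨A, mem_fam.2 (Or.inr (Or.inr (Or.inl ⟨hA.trans hdsub, hAc⟩))),
          fun x hx => dS x (hA hx)⟩
    · by_cases ht : (G ∩ Sset r).card = r
      · exfalso
        apply hGF
        have : G ∩ Sset r = G := Finset.eq_of_subset_of_card_le hsub' (by omega)
        exact mem_fam.2 (Or.inr (Or.inr (Or.inl ⟨this ▸ hsub, hc⟩)))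
      by_cases ht2 : (G ∩ Sset r).card = r - 1
      · have h0 : Sset r \ G ≠ S0set r := by
          intro h0
          apply hGF
          obtain ⟨i, hi⟩ : (G \ Sset r).Nonempty := by
            rw [← Finset.card_pos]; omega
          rw [Finset.mem_sdiff] at hi
          have hi2 := Finset.mem_Icc.1 (hG hi.1)
          have hi3 : i ≠ 1 := fun h => h1 (h ▸ hi.1)
          have hi4 := hi.2
          rw [mem_S] at hi4
          refine mem_fam.2 (Or.inr (Or.inr (Or.inr ⟨i, by omega, by omega, ?_⟩)))
          apply Finset.eq_of_subset_of_card_le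
          · refine Finset.insert_subset hi.1 ?_
            rw [← h0]
            intro x hx
            by_contra hxG
            rw [Finset.mem_sdiff, Finset.mem_sdiff] at hx
            exact hx.2 ⟨hx.1, hxG⟩
          · rw [Finset.card_insert_of_notMem (fun h => hi.2 (Finset.mem_sdiff.1 h).1)]
            omega
        obtain ⟨i, hi, hi', hiG⟩ := exists_out (r := r) (G := G) hn (by omega)
        refine ⟨_, mem_fam.2 (Or.inr (Or.inl ⟨i, Sset r \ G, hi, hi', hdsub, by omega, h0, rfl⟩)), ?_⟩
        intro x hx
        rcases Finset.mem_insert.1 hx with rfl | hx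
        · exact h1
        rcases Finset.mem_insert.1 hx with rfl | hx
        · exact hiG
        · exact dS x hx
      · obtain ⟨A, hA, hAc⟩ := Finset.exists_subset_card_eq (s := Sset r \ G) (n := r - 1) (by omega)
        refine ⟨_, mem_fam.2 (Or.inl ⟨A, hA.trans hdsub, hAc, rfl⟩), ?_⟩
        intro x hx
        rcases Finset.mem_insert.1 hx with rfl | hx
        · exact h1
        · exact dS x (hA hx)
end

section
/- Let n, r be positive integers with r ≤ n and let F be a nonempty intersecting family of r-element subsets of [n] with ∪F = [n]. Then r² · Δ(F) ≥ n · δ(F); that is, the ratio of the maximum degree to the minimum degree of F is at least n/r². (Maximality of F is not needed.) -/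
/-- For a nonempty intersecting family `F` of `r`-subsets of `[n]` with
`∪F = [n]` we have `r²·Δ(F) ≥ n·δ(F)`. Maximality is not needed. -/
theorem ratio_lower_bound (n r : ℕ) (hr : 1 ≤ r) (hrn : r ≤ n)
    (F : Finset (Finset ℕ)) (hne : F.Nonempty) (hfam : IsFamily n r F)
    (hint : IsIntersecting F) (hcov : Covers n F) :
    n * minDeg n F ≤ r ^ 2 * maxDeg n F := by
  have hbdd : BddAbove (degree F '' Set.Icc 1 n) := (Set.finite_Icc 1 n).image _ |>.bddAbove
  have hmax : ∀ x ∈ Finset.Icc 1 n, degree F x ≤ maxDeg n F := fun x hx =>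
    le_csSup hbdd ⟨x, by simpa using hx, rfl⟩
  have hmin : ∀ x ∈ Finset.Icc 1 n, minDeg n F ≤ degree F x := fun x hx =>
    Nat.sInf_le ⟨x, by simpa using hx, rfl⟩
  have h1 : n * minDeg n F ≤ ∑ x ∈ Finset.Icc 1 n, degree F x := by
    have := Finset.card_nsmul_le_sum (Finset.Icc 1 n) (degree F) _ hmin
    simpa using this
  have h2 : ∑ x ∈ Finset.Icc 1 n, degree F x = F.card * r := by
    have h := Finset.sum_card_bipartiteAbove_eq_sum_card_bipartiteBelow
      (s := Finset.Icc 1 n) (t := F) (fun x A => x ∈ A)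
    simp only [Finset.bipartiteAbove, Finset.bipartiteBelow] at h
    unfold degree
    rw [h, Finset.sum_const_nat]
    intro A hA
    rw [Finset.filter_mem_eq_inter, Finset.inter_eq_right.2 (hfam A hA).1, (hfam A hA).2]
  obtain ⟨A, hA⟩ := hne
  have h3 : F.card ≤ ∑ x ∈ A, degree F x := by
    refine le_trans (Finset.card_le_card ?_) (Finset.card_biUnion_le (s := A)
      (t := fun x => F.filter (fun B => x ∈ B)))
    intro B hB
    obtain ⟨x, hx⟩ := hint A hA B hB
    rw [Finset.mem_inter] at hx
    exact Finset.mem_biUnion.2 ⟨x, hx.1, Finset.mem_filter.2 ⟨hB, hx.2⟩⟩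
  have h4 : ∑ x ∈ A, degree F x ≤ r * maxDeg n F := by
    have := Finset.sum_le_card_nsmul A (degree F) _ (fun x hx => hmax x ((hfam A hA).1 hx))
    simpa [(hfam A hA).2] using this
  calc n * minDeg n F ≤ F.card * r := h2 ▸ h1
    _ ≤ (r * maxDeg n F) * r := Nat.mul_le_mul_right _ (h3.trans h4)
    _ = r ^ 2 * maxDeg n F := by ring
end

section
/- There exists a positive integer r₀ such that for all integers n, r with r₀ ≤ r and r² ≤ n, there is a maximal intersecting family F of r-element subsets of [n] with ∪F = [n] satisfying 4 · r² · Δ(F) ≤ 25 · n · δ(F); that is, Δ(F)/δ(F) ≤ (25/4) · n/r². In particular, for r ≤ n^{1/2} the minimum possible value of Δ(F)/δ(F) over maximal intersecting families covering [n] is Θ(n/r²). -/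
open Polynomial in
theorem prod_X_sub_aux (p : ℕ) [Fact p.Prime] :
    ∏ a : ZMod p, (X - C a) = (X ^ p - X : (ZMod p)[X]) := by
  have hXm : (X ^ p - X : (ZMod p)[X]).Monic :=
    monic_X_pow_sub (by simpa using (Fact.out : p.Prime).one_lt)
  have hXd : (X ^ p - X : (ZMod p)[X]).natDegree = p :=
    FiniteField.X_pow_card_sub_X_natDegree_eq (ZMod p) (Fact.out : p.Prime).one_lt
  have hr := FiniteField.roots_X_pow_card_sub_X (ZMod p)
  rw [ZMod.card] at hr
  have := prod_multiset_X_sub_C_of_monic_of_roots_card_eq hXm (by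
    rw [hr, hXd]; simp [ZMod.card])
  rw [hr] at this
  exact this

open Polynomial in
theorem coeff_aux {K : Type*} [Field K] (S : Finset (K × K)) :
    ∀ j ≤ S.card,
    ((∏ z ∈ S, (X + C (C z.1 * X + C z.2)) : K[X][X]).coeff j).natDegree ≤ S.card - j ∧
    ((∏ z ∈ S, (X + C (C z.1 * X + C z.2)) : K[X][X]).coeff j).coeff (S.card - j) =
      (∏ z ∈ S, (X + C z.1) : K[X]).coeff j := by
  classical
  induction S using Finset.induction_on with
  | empty =>
    intro j hj
    simp at hj
    subst hj
    simp
  | insert a s ha ih =>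
    intro j hj
    rw [Finset.card_insert_of_notMem ha] at hj ⊢
    rw [Finset.prod_insert ha, Finset.prod_insert ha]
    set P : K[X][X] := ∏ z ∈ s, (X + C (C z.1 * X + C z.2)) with hP
    set f : K[X] := ∏ z ∈ s, (X + C z.1) with hf
    have hPdeg : P.natDegree = s.card := by
      rw [hP, natDegree_prod_of_monic _ _ (fun i _ => monic_X_add_C _)]
      simp only [natDegree_X_add_C, Finset.sum_const, smul_eq_mul, mul_one]
    have hfdeg : f.natDegree = s.card := by
      rw [hf, natDegree_prod_of_monic _ _ (fun i _ => monic_X_add_C _)]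
      simp only [natDegree_X_add_C, Finset.sum_const, smul_eq_mul, mul_one]
    have hlin : (C a.1 * X + C a.2 : K[X]).natDegree ≤ 1 := natDegree_linear_le
    have key : ∀ i ≤ s.card, ((C a.1 * X + C a.2) * P.coeff i).natDegree ≤ s.card + 1 - i ∧
        ((C a.1 * X + C a.2) * P.coeff i).coeff (s.card + 1 - i) = a.1 * f.coeff i := by
      intro i hi
      obtain ⟨h1, h2⟩ := ih i hi
      constructor
      · refine natDegree_mul_le.trans ?_
        omega
      · have e : s.card + 1 - i = (s.card - i) + 1 := by omega
        rw [e, add_mul, coeff_add, mul_assoc, coeff_C_mul, coeff_X_mul, h2, coeff_C_mul,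
          coeff_eq_zero_of_natDegree_lt (p := P.coeff i) (by omega)]
        simp
    rcases j with _ | j
    · have := key 0 (by omega)
      rw [add_mul, add_mul]
      simpa using this
    · rw [add_mul, add_mul, coeff_add, coeff_X_mul, coeff_C_mul, coeff_add (X * f), coeff_X_mul,
        coeff_C_mul]
      obtain ⟨h1, h2⟩ := ih j (by omega)
      have e : s.card + 1 - (j+1) = s.card - j := by omega
      rw [e]
      rcases Nat.lt_or_ge s.card (j+1) with h | h
      · have : P.coeff (j+1) = 0 := coeff_eq_zero_of_natDegree_lt (by omega)
        have h' : f.coeff (j+1) = 0 := coeff_eq_zero_of_natDegree_lt (by omega)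
        rw [this, h', mul_zero, mul_zero, add_zero, add_zero]
        exact ⟨h1, h2⟩
      · obtain ⟨h3, h4⟩ := key (j+1) h
        rw [e] at h3 h4
        refine ⟨(natDegree_add_le _ _).trans (max_le h1 h3), ?_⟩
        rw [coeff_add, h2, h4]

open MvPolynomial in
theorem jamison_aux {p : ℕ} [Fact p.Prime] (S : Finset (ZMod p × ZMod p))
    (h1 : ∀ t u : ZMod p, ∃ z ∈ S, t + z.1 * u + z.2 = 0)
    (h2 : ∀ c : ZMod p, ∃ z ∈ S, z.1 = c) : 2 * p ≤ S.card + 1 := by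
  classical
  have hp : 2 ≤ p := (Fact.out : p.Prime).two_le
  obtain ⟨z0, hz0, -⟩ := h2 0
  by_contra hlt
  set F : MvPolynomial (Fin 2) (ZMod p) :=
    ∏ z ∈ S.erase z0, (1 + (C (z.1 - z0.1) * X 0 + C (z.2 - z0.2) * X 1)) with hF
  have hdeg : F.totalDegree ≤ S.card - 1 := by
    rw [← Finset.card_erase_of_mem hz0, hF]
    refine (totalDegree_finsetProd _ _).trans ?_
    rw [Finset.card_eq_sum_ones]
    refine Finset.sum_le_sum fun z _ => ?_
    refine (totalDegree_add _ _).trans (max_le (by simp) ?_)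
    refine (totalDegree_add _ _).trans (max_le ?_ ?_)
    · refine (totalDegree_mul _ _).trans (by rw [totalDegree_C, totalDegree_X])
    · refine (totalDegree_mul _ _).trans (by rw [totalDegree_C, totalDegree_X])
  have hcard : 0 < S.card := Finset.card_pos.mpr ⟨z0, hz0⟩
  have hsum := MvPolynomial.sum_eval_eq_zero F (by
    rw [ZMod.card, Fintype.card_fin]; omega)
  rw [Finset.sum_eq_single (0 : Fin 2 → ZMod p)] at hsum
  · simp [hF, map_prod] at hsum
  · intro x _ hx
    have : ∃ z ∈ S, 1 + ((z.1 - z0.1) * x 0 + (z.2 - z0.2) * x 1) = 0 := by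
      by_cases hb : x 1 = 0
      · have ha : x 0 ≠ 0 := by
          intro ha
          apply hx
          ext i
          fin_cases i <;> simp [ha, hb]
        obtain ⟨z, hz, e⟩ := h2 (z0.1 - (x 0)⁻¹)
        refine ⟨z, hz, ?_⟩
        rw [e, hb]
        field_simp
        ring
      · obtain ⟨z, hz, e⟩ := h1 ((1 - x 0 * z0.1 - x 1 * z0.2) / x 1) (x 0 / x 1)
        refine ⟨z, hz, ?_⟩
        field_simp at e
        linear_combination e
    obtain ⟨z, hz, e⟩ := this
    rw [hF, map_prod]
    refine Finset.prod_eq_zero (i := z) (Finset.mem_erase.mpr ⟨?_, hz⟩) (by simpa using e)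
    rintro rfl
    simp at e
  · simp

open Polynomial in
/-- Vanishing of the middle coefficients. -/
theorem lacunary_aux {p : ℕ} [Fact p.Prime] (S : Finset (ZMod p × ZMod p)) (k : ℕ)
    (hk : S.card = p + k)
    (h1 : ∀ t u : ZMod p, ∃ z ∈ S, t + z.1 * u + z.2 = 0) (j : ℕ) (hj : k < j) (hjp : j < p) :
    (∏ z ∈ S, (X + C z.1) : (ZMod p)[X]).coeff j = 0 := by
  classical
  set P : (ZMod p)[X][X] := ∏ z ∈ S, (X + C (C z.1 * X + C z.2)) with hP
  obtain ⟨hd, hc⟩ := coeff_aux S j (by omega)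
  rw [← hP] at hd hc
  have hconst : ∀ u : ZMod p, (P.coeff j).eval u = - (if j = k + 1 then 1 else 0) := by
    intro u
    set Q : (ZMod p)[X] := ∏ z ∈ S, (X + C (z.1 * u + z.2)) with hQ
    have e : P.map (evalRingHom u) = Q := by
      rw [hP, Polynomial.map_prod, hQ]
      refine Finset.prod_congr rfl fun z _ => ?_
      simp
    have hQm : Q.Monic := monic_prod_of_monic _ _ (fun i _ => monic_X_add_C _)
    have hQd : Q.natDegree = p + k := by
      rw [hQ, natDegree_prod_of_monic _ _ (fun i _ => monic_X_add_C _)]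
      simp only [natDegree_X_add_C, Finset.sum_const, smul_eq_mul, mul_one, hk]
    have hdvd : (X ^ p - X : (ZMod p)[X]) ∣ Q := by
      rw [← prod_X_sub_aux p]
      refine Finset.prod_dvd_of_coprime ?_ ?_
      · intro a _ b _ hab
        exact pairwise_coprime_X_sub_C Function.injective_id hab
      · intro t _
        rw [dvd_iff_isRoot, IsRoot, hQ, eval_prod]
        obtain ⟨z, hz, e⟩ := h1 t u
        refine Finset.prod_eq_zero hz ?_
        simp only [eval_add, eval_X, eval_C]
        linear_combination e
    obtain ⟨G, hG⟩ := hdvd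
    have hXm : (X ^ p - X : (ZMod p)[X]).Monic := 
      monic_X_pow_sub (by simpa using (Fact.out : p.Prime).one_lt)
    have hGm : G.Monic := by
      rw [hG] at hQm; exact hXm.of_mul_monic_left hQm
    have hXd : (X ^ p - X : (ZMod p)[X]).natDegree = p := 
      FiniteField.X_pow_card_sub_X_natDegree_eq (ZMod p) (Fact.out : p.Prime).one_lt
    have hGd : G.natDegree = k := by
      have := hXm.natDegree_mul hGm
      rw [← hG, hQd, hXd] at this
      omega
    have : (P.coeff j).eval u = Q.coeff j := by
      rw [← e, coeff_map]; rfl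
    rw [this, hG, sub_mul, coeff_sub, coeff_X_pow_mul', if_neg (by omega)]
    obtain ⟨i, rfl⟩ : ∃ i, j = i + 1 := ⟨j - 1, by omega⟩
    rw [coeff_X_mul]
    split_ifs with h
    · have : i = G.natDegree := by omega
      rw [this, hGm.coeff_natDegree]; simp
    · rw [coeff_eq_zero_of_natDegree_lt (by omega)]; simp
  have hz : P.coeff j - C (- (if j = k + 1 then 1 else 0)) = 0 := by
    refine eq_zero_of_natDegree_lt_card_of_eval_eq_zero _ (f := (id : ZMod p → ZMod p))
      Function.injective_id ?_ ?_
    · intro u; simp only [id]; rw [eval_sub, hconst, eval_C, sub_self]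
    · rw [natDegree_sub_C, ZMod.card]; omega
  rw [← hc, sub_eq_zero.mp hz, coeff_C, if_neg (by omega)]

open Polynomial in
theorem wronskian_aux {p : ℕ} [Fact p.Prime] (g h : (ZMod p)[X]) (k : ℕ) (hkp : k < p)
    (hgk : g.coeff k = 1) (hg : g.natDegree ≤ k) (hh : h.natDegree ≤ k)
    (hw : derivative h * g = h * derivative g) : ∃ c, h = C c * g := by
  refine ⟨h.coeff k, ?_⟩
  by_contra hne
  set e := h - C (h.coeff k) * g with he
  have he0 : e ≠ 0 := fun h0 => hne (sub_eq_zero.mp h0)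
  have hek : e.coeff k = 0 := by rw [he, coeff_sub, coeff_C_mul, hgk, mul_one, sub_self]
  have hed : e.natDegree ≤ k :=
    (natDegree_sub_le _ _).trans (max_le hh ((natDegree_C_mul_le _ _).trans hg))
  have hel : e.natDegree < k := by
    refine lt_of_le_of_ne hed fun h' => he0 ?_
    rw [← leadingCoeff_eq_zero, leadingCoeff, h', hek]
  have hwe : derivative e * g = e * derivative g := by
    rw [he]
    simp only [derivative_sub, derivative_mul, derivative_C, zero_mul, zero_add]
    linear_combination hw
  set l := e.natDegree with hl
  -- compare coefficients of degree `l + k`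
  have hX : (X * derivative e) * g = e * (X * derivative g) := by linear_combination X * hwe
  have cX : ∀ (q : (ZMod p)[X]) (i : ℕ), (X * derivative q).coeff i = i * q.coeff i := by
    intro q i
    rcases i with _ | i
    · simp
    · rw [coeff_X_mul, coeff_derivative]; push_cast; ring
  have dX : ∀ (q : (ZMod p)[X]) (i : ℕ), q.natDegree ≤ i → (X * derivative q).natDegree ≤ i := by
    intro q i hq
    rw [natDegree_le_iff_coeff_eq_zero]
    intro N hN
    rw [cX, coeff_eq_zero_of_natDegree_lt (by omega), mul_zero]
  have h3 : ((X * derivative e) * g).coeff (l + k) = (e * (X * derivative g)).coeff (l + k) := by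
    rw [hX]
  rw [coeff_mul_add_eq_of_natDegree_le (dX e l le_rfl) hg, coeff_mul_add_eq_of_natDegree_le le_rfl (dX g k hg),
    cX, cX, hgk] at h3
  have h4 : e.coeff l ≠ 0 := by
    rw [hl, coeff_natDegree]; exact leadingCoeff_ne_zero.mpr he0
  have h5 : (l : ZMod p) = (k : ZMod p) := by
    have : e.coeff l * ((l : ZMod p) - k) = 0 := by linear_combination h3
    rcases mul_eq_zero.mp this with h | h
    · exact absurd h h4
    · exact sub_eq_zero.mp h
  rw [ZMod.natCast_eq_natCast_iff, Nat.ModEq, Nat.mod_eq_of_lt (by omega),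
    Nat.mod_eq_of_lt hkp] at h5
  omega

open Polynomial in
theorem affine_blokhuis {p : ℕ} [Fact p.Prime] (S : Finset (ZMod p × ZMod p))
    (h1 : ∀ t u : ZMod p, ∃ z ∈ S, t + z.1 * u + z.2 = 0)
    (hcard : 2 * S.card < 3 * p) : ∃ c, ∀ b, (c, b) ∈ S := by
  classical
  have hp : 2 ≤ p := (Fact.out : p.Prime).two_le
  have hpS : p ≤ S.card := by
    have : (Finset.univ : Finset (ZMod p)) ⊆ S.image Prod.snd := by
      intro t _
      obtain ⟨z, hz, e⟩ := h1 (-t) 0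
      exact Finset.mem_image.mpr ⟨z, hz, by linear_combination e⟩
    have := (Finset.card_le_card this).trans Finset.card_image_le
    simpa [ZMod.card] using this
  obtain ⟨k, hk⟩ := Nat.exists_eq_add_of_le hpS
  have hmiss : ∃ c0 : ZMod p, ∀ z ∈ S, z.1 ≠ c0 := by
    by_contra hcon
    push Not at hcon
    have := jamison_aux S h1 hcon
    omega
  obtain ⟨c0, hc0⟩ := hmiss
  set f : (ZMod p)[X] := ∏ z ∈ S, (X + C z.1) with hf
  have hfm : f.Monic := monic_prod_of_monic _ _ (fun i _ => monic_X_add_C _)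
  have hfd : f.natDegree = p + k := by
    rw [hf, natDegree_prod_of_monic _ _ (fun i _ => monic_X_add_C _)]
    simp only [natDegree_X_add_C, Finset.sum_const, smul_eq_mul, mul_one, hk]
  set h := f %ₘ X ^ p with hh
  set g := f /ₘ X ^ p with hg
  have hfe : h + X ^ p * g = f := modByMonic_add_div f (X ^ p)
  have hhp : h.natDegree < p := by
    have := natDegree_modByMonic_lt f (monic_X_pow (R := ZMod p) p) (by
      intro h0
      have := congrArg natDegree h0
      simp at this
      omega)
    simpa using this
  have hgc : ∀ i, g.coeff i = f.coeff (i + p) := by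
    intro i
    have hz : h.coeff (i + p) = 0 := coeff_eq_zero_of_natDegree_lt (by omega)
    rw [← hfe, coeff_add, hz, zero_add, coeff_X_pow_mul]
  have hgk : g.coeff k = 1 := by
    rw [hgc, add_comm, ← hfd]; exact hfm
  have hgd : g.natDegree ≤ k := by
    rw [natDegree_le_iff_coeff_eq_zero]
    intro N hN
    rw [hgc, coeff_eq_zero_of_natDegree_lt (by omega)]
  have hhd : h.natDegree ≤ k := by
    rw [natDegree_le_iff_coeff_eq_zero]
    intro N hN
    rcases Nat.lt_or_ge N p with hNp | hNp
    · have := lacunary_aux S k hk h1 N hN hNp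
      rw [← hf, ← hfe, coeff_add, coeff_X_pow_mul', if_neg (by omega), add_zero] at this
      exact this
    · exact coeff_eq_zero_of_natDegree_lt (by omega)
  set s : (ZMod p)[X] := ∏ c ∈ S.image Prod.fst, (X + C c) with hs
  have hcop : ∀ a b : ZMod p, a ≠ b → IsCoprime (X + C a) (X + C b) := by
    intro a b hab
    have := pairwise_coprime_X_sub_C (Function.injective_id (α := ZMod p)) 
      (show -a ≠ -b from fun h => hab (neg_injective h))
    simpa [Function.onFun] using this
  have hsX : s ∣ X ^ p - X := by
    rw [hs]
    refine Finset.prod_dvd_of_coprime (fun a _ b _ hab => hcop a b hab) ?_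
    intro c _
    rw [← prod_X_sub_aux p]
    have := Finset.dvd_prod_of_mem (fun a : ZMod p => (X - C a : (ZMod p)[X]))
      (Finset.mem_univ (-c))
    simpa using this
  have hsf : s ∣ f := by
    rw [hs]
    refine Finset.prod_dvd_of_coprime (fun a _ b _ hab => hcop a b hab) ?_
    intro c hc
    obtain ⟨z, hz, rfl⟩ := Finset.mem_image.mp hc
    exact Finset.dvd_prod_of_mem (fun z : ZMod p × ZMod p => (X + C z.1 : (ZMod p)[X])) hz
  have hsq : s ∣ X * g + h := by
    have : X * g + h = f - (X ^ p - X) * g := by rw [← hfe]; ring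
    rw [this]
    exact dvd_sub hsf (hsX.mul_right g)
  have hfs : f ∣ s * derivative f := by
    rw [hf, derivative_prod_finset, Finset.mul_sum]
    refine Finset.dvd_sum fun z hz => ?_
    rw [← Finset.mul_prod_erase S _ hz]
    simp only [derivative_add, derivative_X, derivative_C, add_zero, mul_one]
    refine mul_dvd_mul ?_ dvd_rfl
    exact Finset.dvd_prod_of_mem (fun c : ZMod p => (X + C c : (ZMod p)[X]))
      (Finset.mem_image_of_mem _ hz)
  have hf' : derivative f = derivative h + X ^ p * derivative g := by
    rw [← hfe, derivative_add, derivative_mul, derivative_X_pow, CharP.cast_eq_zero]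
    simp
  have hdvd : f ∣ (X * g + h) * (derivative h * g - h * derivative g) := by
    have e : (X * g + h) * (derivative h * g - h * derivative g) =
        ((X * g + h) * derivative f) * g - f * ((X * g + h) * derivative g) := by
      rw [hf', ← hfe]; ring
    rw [e]
    refine dvd_sub ?_ (dvd_mul_right _ _)
    exact (hfs.trans (mul_dvd_mul_right hsq _)).mul_right g
  have hzero : (X * g + h) * (derivative h * g - h * derivative g) = 0 := by
    refine eq_zero_of_dvd_of_natDegree_lt hdvd ?_
    have d1 : (X * g + h).natDegree ≤ k + 1 := by
      refine (natDegree_add_le _ _).trans (max_le ?_ (by omega))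
      refine natDegree_mul_le.trans ?_
      rw [natDegree_X]; omega
    have d2 : (derivative h * g - h * derivative g).natDegree ≤ 2 * k - 1 := by
      have e1 := natDegree_derivative_le h
      have e2 := natDegree_derivative_le g
      rcases Nat.eq_zero_or_pos k with hk0 | hk0
      · have a1 : derivative h = 0 := derivative_of_natDegree_zero (by omega)
        have a2 : derivative g = 0 := derivative_of_natDegree_zero (by omega)
        simp [a1, a2]
      · refine (natDegree_sub_le _ _).trans (max_le ?_ ?_)
        · refine natDegree_mul_le.trans ?_
          omega
        · refine natDegree_mul_le.trans ?_
          omega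
    rw [hfd]
    refine lt_of_le_of_lt natDegree_mul_le ?_
    omega
  rcases mul_eq_zero.mp hzero with h0 | h0
  · exfalso
    have : f = (X ^ p - X) * g := by rw [← hfe]; linear_combination h0
    have hev := congrArg (eval (-c0)) this
    rw [hf, eval_prod, eval_mul, eval_sub, eval_pow, eval_X, ZMod.pow_card, sub_self, zero_mul,
      Finset.prod_eq_zero_iff] at hev
    obtain ⟨z, hz, e⟩ := hev
    simp only [eval_add, eval_X, eval_C] at e
    exact hc0 z hz (by linear_combination e)
  · obtain ⟨c, hc⟩ := wronskian_aux g h k (by omega) hgk hgd hhd (sub_eq_zero.mp h0)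
    refine ⟨c, ?_⟩
    have hfac : f = (X + C c) ^ p * g := by
      rw [add_pow_char, ← C_pow, ZMod.pow_card, ← hfe, hc]; ring
    -- split off the factors with `z.1 = c`
    set S1 := S.filter (fun z => z.1 = c) with hS1
    set S2 := S.filter (fun z => ¬ z.1 = c) with hS2
    have hsplit : f = (X + C c) ^ S1.card * ∏ z ∈ S2, (X + C z.1) := by
      rw [hf, ← Finset.prod_filter_mul_prod_filter_not S (fun z => z.1 = c)]
      congr 1
      rw [Finset.prod_congr rfl (g := fun _ => (X + C c : (ZMod p)[X]))]
      · rw [Finset.prod_const]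
      · intro z hz
        rw [(Finset.mem_filter.mp hz).2]
    have hle : p ≤ S1.card := by
      by_contra hlt
      push Not at hlt
      have : (X + C c) ^ p ∣ (X + C c) ^ S1.card * ∏ z ∈ S2, (X + C z.1) := by
        rw [← hsplit, hfac]; exact dvd_mul_right _ _
      obtain ⟨d, hd⟩ := Nat.exists_eq_add_of_lt hlt
      have hpow : (X + C c) ^ p = (X + C c) ^ S1.card * (X + C c) ^ (d + 1) := by
        rw [← pow_add]; congr 1
      rw [hpow] at this
      have h2 := (mul_dvd_mul_iff_left (pow_ne_zero _ (monic_X_add_C c).ne_zero)).mp this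
      have h3 : (X + C c) ∣ ∏ z ∈ S2, (X + C z.1) := (dvd_pow_self _ (by omega)).trans h2
      have h4 : IsCoprime (X + C c) (∏ z ∈ S2, (X + C z.1)) := by
        refine IsCoprime.prod_right fun z hz => hcop _ _ ?_
        exact fun h => (Finset.mem_filter.mp hz).2 h.symm
      have h5 := h4.isUnit_of_dvd' dvd_rfl h3
      have := natDegree_eq_zero_of_isUnit h5
      rw [natDegree_X_add_C] at this
      omega
    have himg : (S1.image Prod.snd) = Finset.univ := by
      rw [← Finset.card_eq_iff_eq_univ, ZMod.card]
      apply le_antisymm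
      · simpa [ZMod.card] using Finset.card_le_univ (S1.image Prod.snd)
      · rw [Finset.card_image_of_injOn]
        · exact hle
        · intro z hz w hw e
          have a := (Finset.mem_filter.mp hz).2
          have b := (Finset.mem_filter.mp hw).2
          exact Prod.ext (a.trans b.symm) e
    intro b
    have hb : b ∈ S1.image Prod.snd := by rw [himg]; exact Finset.mem_univ _
    obtain ⟨z, hz, rfl⟩ := Finset.mem_image.mp hb
    obtain ⟨hzS, rfl⟩ := Finset.mem_filter.mp hz
    exact hzS

open Projectivization Configuration Matrix in
theorem proj_eq_aux {K : Type*} [Field K] [DecidableEq K] (v v' : Projectivization K (Fin 3 → K))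
    (x y : Fin 3 → K) (hxy : crossProduct x y ≠ 0)
    (h1 : v.rep ⬝ᵥ x = 0) (h2 : v'.rep ⬝ᵥ x = 0) (h3 : v.rep ⬝ᵥ y = 0) (h4 : v'.rep ⬝ᵥ y = 0) :
    v = v' := by
  rcases ofField.crossProduct_eq_zero_of_dotProduct_eq_zero h1 h2 h3 h4 with h | h
  · rw [← mk_eq_mk_iff_crossProduct_eq_zero v.rep_nonzero v'.rep_nonzero] at h
    simpa using h
  · exact absurd h hxy

open Projectivization Configuration Matrix in
theorem orth_rep {K : Type*} [Field K] [DecidableEq K] (v w : Projectivization K (Fin 3 → K)) :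
    orthogonal v w ↔ v.rep ⬝ᵥ w.rep = 0 := by
  rw [← orthogonal_mk v.rep_nonzero w.rep_nonzero]; simp

open Projectivization Configuration Matrix in
theorem orth_mk {K : Type*} [Field K] [DecidableEq K] (v : Projectivization K (Fin 3 → K)) (w : Fin 3 → K)
    (hw : w ≠ 0) :
    orthogonal v (Projectivization.mk K w hw) ↔ v.rep ⬝ᵥ w = 0 := by
  rw [← orthogonal_mk v.rep_nonzero hw]; simp

open Projectivization Configuration Matrix in
theorem proj_blokhuis {p : ℕ} [Fact p.Prime] (B : Finset (Projectivization (ZMod p) (Fin 3 → ZMod p)))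
    (hB : ∀ w, ∃ v ∈ B, orthogonal v w) (hno : ∀ w, ∃ v, orthogonal v w ∧ v ∉ B) :
    3 * p + 2 ≤ 2 * B.card := by
  classical
  by_contra hlt
  push Not at hlt
  obtain ⟨B0, hB0B, hmin⟩ := exists_minimal_le_of_wellFoundedLT
    (fun B : Finset (Projectivization (ZMod p) (Fin 3 → ZMod p)) => ∀ w, ∃ v ∈ B, orthogonal v w) B hB
  have hB0 := hmin.prop
  obtain ⟨wa, hwa⟩ : ∃ w : Projectivization (ZMod p) (Fin 3 → ZMod p), True :=
    ⟨Projectivization.mk _ (fun _ => 1) (by intro h; simpa using congrFun h 0), trivial⟩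
  obtain ⟨v0, hv0, -⟩ := hB0 wa
  -- tangent line
  have h1 : ∃ w0, ∀ v ∈ B0.erase v0, ¬ orthogonal v w0 := by
    by_contra hcon
    push Not at hcon
    have := hmin.le_of_le (y := B0.erase v0) hcon (Finset.erase_subset _ _)
    exact Finset.notMem_erase v0 B0 (this hv0)
  obtain ⟨w0, hw0⟩ := h1
  have hv0w0 : orthogonal v0 w0 := by
    obtain ⟨v, hv, hvw⟩ := hB0 w0
    by_cases hvv : v = v0
    · exact hvv ▸ hvw
    · exact absurd hvw (hw0 v (Finset.mem_erase.mpr ⟨hvv, hv⟩))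
  obtain ⟨w1, hv0w1, hw01⟩ : ∃ w1, orthogonal v0 w1 ∧ w1 ≠ w0 := by
    have h2 := ProjectivePlane.two_lt_lineCount
      (P := Projectivization (ZMod p) (Fin 3 → ZMod p))
      (L := Projectivization (ZMod p) (Fin 3 → ZMod p)) v0
    rw [lineCount] at h2
    have : Finite { l : Projectivization (ZMod p) (Fin 3 → ZMod p) // v0 ∈ l } := inferInstance
    have : Nontrivial { l : Projectivization (ZMod p) (Fin 3 → ZMod p) // v0 ∈ l } := by
      rw [← Finite.one_lt_card_iff_nontrivial]; omega
    obtain ⟨⟨y, hy⟩, hne⟩ := exists_ne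
      (⟨w0, hv0w0⟩ : { l : Projectivization (ZMod p) (Fin 3 → ZMod p) // v0 ∈ l })
    exact ⟨y, hy, fun h => hne (Subtype.ext h)⟩
  obtain ⟨w2, hv0w2⟩ := exists_not_self_orthogonal v0
  rw [orth_rep] at hv0w0 hv0w1 hv0w2
  have hcross : crossProduct w0.rep w1.rep ≠ 0 := by
    intro h
    rw [← mk_eq_mk_iff_crossProduct_eq_zero w0.rep_nonzero w1.rep_nonzero] at h
    apply hw01
    simpa using h.symm
  have hw0' : ∀ v ∈ B0.erase v0, v.rep ⬝ᵥ w0.rep ≠ 0 := by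
    intro v hv; have := hw0 v hv; rwa [orth_rep] at this
  set S : Finset (ZMod p × ZMod p) := (B0.erase v0).image
    (fun v => ((v.rep ⬝ᵥ w1.rep) / (v.rep ⬝ᵥ w0.rep), (v.rep ⬝ᵥ w2.rep) / (v.rep ⬝ᵥ w0.rep)))
    with hS
  have hScard : S.card ≤ B.card - 1 := by
    refine Finset.card_image_le.trans ?_
    rw [Finset.card_erase_of_mem hv0]
    exact Nat.sub_le_sub_right (Finset.card_le_card hB0B) 1
  have hp2 := (Fact.out : p.Prime).two_le
  obtain ⟨c, hc⟩ := affine_blokhuis S (by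
    intro t u
    have hne : t • w0.rep + u • w1.rep + w2.rep ≠ 0 := by
      intro h
      have h3 := congrArg (fun z => v0.rep ⬝ᵥ z) h
      simp only [dotProduct_add, dotProduct_smul, dotProduct_zero, hv0w0, hv0w1] at h3
      apply hv0w2; simpa using h3
    obtain ⟨v, hv, hvw⟩ := hB0 (Projectivization.mk _ _ hne)
    rw [orth_mk] at hvw
    simp only [dotProduct_add, dotProduct_smul, smul_eq_mul] at hvw
    have hvv : v ≠ v0 := by
      rintro rfl
      apply hv0w2; simpa [hv0w0, hv0w1] using hvw
    have hmem := Finset.mem_erase.mpr ⟨hvv, hv⟩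
    have hd := hw0' v hmem
    refine ⟨_, Finset.mem_image_of_mem _ hmem, ?_⟩
    field_simp
    linear_combination hvw) (by omega)
  have hxne : w1.rep - c • w0.rep ≠ 0 := by
    intro h
    apply hcross
    rw [sub_eq_zero.mp h]; simp
  obtain ⟨v, hv, hvB⟩ := hno (Projectivization.mk _ _ hxne)
  rw [orth_mk] at hv
  have hv' := hv
  simp only [dotProduct_sub, dotProduct_smul, smul_eq_mul] at hv'
  by_cases hd : v.rep ⬝ᵥ w0.rep = 0
  · have : v = v0 := proj_eq_aux v v0 _ _ hcross hd hv0w0 (by simpa [hd] using hv') hv0w1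
    exact hvB (this ▸ hB0B hv0)
  · have hm := hc ((v.rep ⬝ᵥ w2.rep) / (v.rep ⬝ᵥ w0.rep))
    rw [hS, Finset.mem_image] at hm
    obtain ⟨v', hv'm, heq⟩ := hm
    have hd' := hw0' v' hv'm
    rw [Prod.mk.injEq] at heq
    obtain ⟨e1, e2⟩ := heq
    set b := (v.rep ⬝ᵥ w2.rep) / (v.rep ⬝ᵥ w0.rep) with hb
    have hbv : v.rep ⬝ᵥ w2.rep = b * (v.rep ⬝ᵥ w0.rep) := by rw [hb]; field_simp
    rw [div_eq_iff hd'] at e1 e2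
    have hli : crossProduct (w1.rep - c • w0.rep) (w2.rep - b • w0.rep) ≠ 0 := by
      rw [crossProduct_ne_zero_iff_linearIndependent, LinearIndependent.pair_iff]
      intro s t h
      have h3 := congrArg (fun z => v0.rep ⬝ᵥ z) h
      simp only [dotProduct_add, dotProduct_sub, dotProduct_smul, dotProduct_zero, hv0w0, hv0w1]
        at h3
      have ht : t = 0 := by simpa [hv0w2] using h3
      subst ht
      simp only [zero_smul, add_zero, smul_eq_zero, hxne, or_false] at h
      exact ⟨h, rfl⟩
    have : v = v' := by
      refine proj_eq_aux v v' _ _ hli hv ?_ ?_ ?_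
      · simp [dotProduct_sub, dotProduct_smul, e1]
      · simp [dotProduct_sub, dotProduct_smul, hbv]
      · simp [dotProduct_sub, dotProduct_smul, e2]
    exact hvB (this ▸ hB0B (Finset.mem_of_mem_erase hv'm))

/-- The combinatorial data of a projective plane of order `s` together with the bound on
nontrivial blocking sets. -/
structure IsPlane {P : Type} [Fintype P] [DecidableEq P] (s : ℕ) (L : Finset (Finset P)) :
    Prop where
  card_pts : Fintype.card P = s ^ 2 + s + 1
  card_lines : L.card = s ^ 2 + s + 1
  card_line : ∀ l ∈ L, l.card = s + 1
  deg : ∀ x, (L.filter (fun l => x ∈ l)).card = s + 1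
  inter : ∀ l ∈ L, ∀ m ∈ L, l ≠ m → (l ∩ m).card = 1
  block : ∀ S : Finset P, (∀ l ∈ L, (l ∩ S).Nonempty) → (∀ l ∈ L, ¬ l ⊆ S) →
    3 * (s + 1) ≤ 2 * S.card

open Projectivization Configuration Matrix in
theorem exists_plane (p : ℕ) (hp : p.Prime) (hodd : Odd p) :
    ∃ (P : Type) (_ : Fintype P) (_ : DecidableEq P) (L : Finset (Finset P)), IsPlane p L := by
  classical
  haveI : Fact p.Prime := ⟨hp⟩
  let P := Projectivization (ZMod p) (Fin 3 → ZMod p)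
  let iF : Fintype P := Fintype.ofFinite P
  have hcard : Fintype.card P = p ^ 2 + p + 1 := by
    rw [Fintype.card_eq_nat_card]
    have := card_of_finrank (ZMod p) (Fin 3 → ZMod p) (n := 3) (by simp)
    rw [this]
    simp [Finset.sum_range_succ]; ring
  have hord : ProjectivePlane.order P P = p := by
    have := ProjectivePlane.card_points (P := P) (L := P)
    rw [hcard] at this
    nlinarith [this]
  let f : P → Finset P := fun w => Finset.univ.filter (fun v => v ∈ w)
  have hfc : ∀ w, (f w).card = p + 1 := by
    intro w
    have := ProjectivePlane.pointCount_eq (P := P) (L := P) w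
    rw [hord, pointCount] at this
    rw [← this, Nat.card_eq_fintype_card, Fintype.card_subtype]
  have hp2 := hp.two_le
  have hmeet1 : ∀ w w', w ≠ w' → (f w ∩ f w').card = 1 := by
    intro w w' hne
    rw [Finset.card_eq_one]
    have hax := HasPoints.mkPoint_ax (P := P) (L := P) hne
    refine ⟨HasPoints.mkPoint hne, ?_⟩
    ext v
    simp only [f, Finset.mem_inter, Finset.mem_filter, Finset.mem_univ, true_and,
      Finset.mem_singleton]
    constructor
    · rintro ⟨h1, h2⟩
      rcases Nondegenerate.eq_or_eq h1 hax.1 h2 hax.2 with h | h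
      · exact h
      · exact absurd h hne
    · rintro rfl
      exact hax
  have hinj : Function.Injective f := by
    intro w w' h
    by_contra hne
    have := hmeet1 w w' hne
    rw [← h, Finset.inter_self, hfc] at this
    omega
  refine ⟨P, iF, inferInstance, Finset.univ.image f, ?_, ?_, ?_, ?_, ?_, ?_⟩
  · exact hcard
  · rw [Finset.card_image_of_injective _ hinj, Finset.card_univ, hcard]
  · intro l hl
    obtain ⟨w, -, rfl⟩ := Finset.mem_image.mp hl
    exact hfc w
  · intro x
    rw [Finset.filter_image, Finset.card_image_of_injective _ hinj]
    have := ProjectivePlane.lineCount_eq (P := P) (L := P) x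
    rw [hord, lineCount] at this
    rw [← this, Nat.card_eq_fintype_card, Fintype.card_subtype]
    simp [f]
  · intro l hl m hm hne
    obtain ⟨w, -, rfl⟩ := Finset.mem_image.mp hl
    obtain ⟨w', -, rfl⟩ := Finset.mem_image.mp hm
    exact hmeet1 w w' (fun h => hne (by rw [h]))
  · intro S hS hno
    have := proj_blokhuis (p := p) S (by
      intro w
      obtain ⟨v, hv⟩ := hS (f w) (Finset.mem_image_of_mem _ (Finset.mem_univ _))
      simp only [f, Finset.mem_inter, Finset.mem_filter, Finset.mem_univ, true_and] at hv
      exact ⟨v, hv.2, hv.1⟩) (by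
      intro w
      have := hno (f w) (Finset.mem_image_of_mem _ (Finset.mem_univ _))
      rw [Finset.not_subset] at this
      obtain ⟨v, hv, hvS⟩ := this
      simp only [f, Finset.mem_filter, Finset.mem_univ, true_and] at hv
      exact ⟨v, hv, hvS⟩)
    obtain ⟨k, hk⟩ := hodd
    omega

section Kernels

variable {P Q : Type} [Fintype P] [DecidableEq P] [Fintype Q] [DecidableEq Q]

theorem IsPlane.inter_nonempty {s : ℕ} {L : Finset (Finset P)} (h : IsPlane s L)
    {l m : Finset P} (hl : l ∈ L) (hm : m ∈ L) : (l ∩ m).Nonempty := by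
  rw [← Finset.card_pos]
  by_cases e : l = m
  · subst e; rw [Finset.inter_self, h.card_line l hl]; omega
  · rw [h.inter l hl m hm e]; omega

theorem IsPlane.block' {s : ℕ} {L : Finset (Finset P)} (h : IsPlane s L) (S : Finset P)
    (hS : ∀ l ∈ L, (l ∩ S).Nonempty) : s + 1 ≤ S.card := by
  by_cases hc : ∃ l ∈ L, l ⊆ S
  · obtain ⟨l, hl, hlS⟩ := hc
    rw [← h.card_line l hl]; exact Finset.card_le_card hlS
  · push Not at hc
    have := h.block S hS hc
    omega

/-- functions supported on `l` with values in `D` -/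
def onLine (l : Finset P) (D : Finset (Finset Q)) : Finset (P → Finset Q) :=
  Fintype.piFinset (fun x => if x ∈ l then D else {∅})

theorem mem_onLine {l : Finset P} {D : Finset (Finset Q)} {φ : P → Finset Q} :
    φ ∈ onLine l D ↔ (∀ x ∈ l, φ x ∈ D) ∧ ∀ x, x ∉ l → φ x = ∅ := by
  rw [onLine, Fintype.mem_piFinset]
  constructor
  · intro h
    refine ⟨fun x hx => by simpa [hx] using h x, fun x hx => by simpa [hx] using h x⟩
  · rintro ⟨h1, h2⟩ x
    by_cases hx : x ∈ l
    · simpa [hx] using h1 x hx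
    · simpa [hx] using h2 x hx

theorem card_onLine (l : Finset P) (D : Finset (Finset Q)) :
    (onLine l D).card = D.card ^ l.card := by
  rw [onLine, Fintype.card_piFinset]
  have : ∀ x : P, (if x ∈ l then D else {∅}).card = if x ∈ l then D.card else 1 := by
    intro x; split_ifs <;> simp
  simp_rw [this]
  rw [Finset.prod_ite_mem, Finset.univ_inter, Finset.prod_const]

/-- the kernels -/
def kern (L : Finset (Finset P)) (D : Finset (Finset Q)) : Finset (P → Finset Q) :=
  L.biUnion fun l => onLine l D

theorem onLine_supp {s : ℕ} {D : Finset (Finset Q)} (hD : IsPlane s D) {l : Finset P}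
    {φ : P → Finset Q} (h : φ ∈ onLine l D) (x : P) : x ∈ l ↔ φ x ≠ ∅ := by
  rw [mem_onLine] at h
  constructor
  · intro hx e
    have := hD.card_line _ (h.1 x hx)
    rw [e] at this; simp at this
  · intro hx
    by_contra hc
    exact hx (h.2 x hc)

theorem kern_card {q s : ℕ} {L : Finset (Finset P)} {D : Finset (Finset Q)} (hL : IsPlane q L)
    (hD : IsPlane s D) : (kern L D).card = Fintype.card P * Fintype.card Q ^ (q + 1) := by
  rw [kern, Finset.card_biUnion]
  · rw [Finset.sum_congr rfl (fun l hl => by rw [card_onLine, hL.card_line l hl]),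
      Finset.sum_const, smul_eq_mul, hL.card_lines, hL.card_pts, hD.card_lines, hD.card_pts]
  · intro l hl m hm hne
    rw [Function.onFun, Finset.disjoint_left]
    intro φ h1 h2
    apply hne
    ext x
    rw [onLine_supp hD h1, onLine_supp hD h2]

theorem sum_card_onLine {s : ℕ} {D : Finset (Finset Q)} (hD : IsPlane s D) {l : Finset P}
    {φ : P → Finset Q} (h : φ ∈ onLine l D) : ∑ x, (φ x).card = l.card * (s + 1) := by
  rw [mem_onLine] at h
  have : ∀ x : P, (φ x).card = if x ∈ l then s + 1 else 0 := by
    intro x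
    split_ifs with hx
    · exact hD.card_line _ (h.1 x hx)
    · rw [h.2 x hx]; simp
  simp_rw [this]
  rw [Finset.sum_ite_mem, Finset.univ_inter, Finset.sum_const, smul_eq_mul]

theorem kern_size {q s : ℕ} {L : Finset (Finset P)} {D : Finset (Finset Q)} (hL : IsPlane q L)
    (hD : IsPlane s D) {φ : P → Finset Q} (h : φ ∈ kern L D) :
    ∑ x, (φ x).card = (q + 1) * (s + 1) := by
  rw [kern, Finset.mem_biUnion] at h
  obtain ⟨l, hl, h⟩ := h
  rw [sum_card_onLine hD h, hL.card_line l hl]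

theorem kern_inter {q s : ℕ} {L : Finset (Finset P)} {D : Finset (Finset Q)} (hL : IsPlane q L)
    (hD : IsPlane s D) {φ φ' : P → Finset Q} (h : φ ∈ kern L D) (h' : φ' ∈ kern L D) :
    ∃ x, (φ x ∩ φ' x).Nonempty := by
  rw [kern, Finset.mem_biUnion] at h h'
  obtain ⟨l, hl, h⟩ := h
  obtain ⟨m, hm, h'⟩ := h'
  obtain ⟨x, hx⟩ := hL.inter_nonempty hl hm
  rw [Finset.mem_inter] at hx
  rw [mem_onLine] at h h'
  exact ⟨x, hD.inter_nonempty (h.1 x hx.1) (h'.1 x hx.2)⟩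

theorem kern_diff {q s : ℕ} {L : Finset (Finset P)} {D : Finset (Finset Q)} (hL : IsPlane q L)
    (hD : IsPlane s D) {φ φ' : P → Finset Q} (h : φ ∈ kern L D) (h' : φ' ∈ kern L D)
    (hne : φ' ≠ φ) : ∃ x, s ≤ (φ' x \ φ x).card := by
  rw [kern, Finset.mem_biUnion] at h h'
  obtain ⟨l, hl, h⟩ := h
  obtain ⟨m, hm, h'⟩ := h'
  have hex : ∃ x ∈ m, φ' x ≠ φ x := by
    by_contra hcon
    push Not at hcon
    apply hne
    have hml : m ⊆ l := by
      intro x hx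
      rw [onLine_supp hD h, ← hcon x hx, ← onLine_supp hD h']; exact hx
    have hml : m = l := Finset.eq_of_subset_of_card_le hml
      (by rw [hL.card_line l hl, hL.card_line m hm])
    subst hml
    funext x
    by_cases hx : x ∈ m
    · exact hcon x hx
    · rw [(mem_onLine.mp h).2 x hx, (mem_onLine.mp h').2 x hx]
  obtain ⟨x, hx, hxne⟩ := hex
  have h1 := (mem_onLine.mp h').1 x hx
  have hc := hD.card_line _ h1
  refine ⟨x, ?_⟩
  have hle : (φ' x ∩ φ x).card ≤ 1 := by
    by_cases hxl : x ∈ l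
    · rw [hD.inter _ h1 _ ((mem_onLine.mp h).1 x hxl) hxne]
    · rw [(mem_onLine.mp h).2 x hxl]; simp
  have := Finset.card_sdiff_add_card_inter (φ' x) (φ x)
  omega

theorem kern_deg {q s : ℕ} {L : Finset (Finset P)} {D : Finset (Finset Q)} (hL : IsPlane q L)
    (hD : IsPlane s D) (x : P) (y : Q) :
    ((kern L D).filter (fun φ => y ∈ φ x)).card ≤
      (q + 1) * ((s + 1) * Fintype.card Q ^ q) := by
  have hsub : (kern L D).filter (fun φ => y ∈ φ x) ⊆
      (L.filter (fun l => x ∈ l)).biUnion (fun l => Fintype.piFinset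
        (fun x' => if x' = x then D.filter (fun d => y ∈ d) else if x' ∈ l then D else {∅})) := by
    intro φ hφ
    rw [Finset.mem_filter, kern, Finset.mem_biUnion] at hφ
    obtain ⟨⟨l, hl, h⟩, hy⟩ := hφ
    have hxl : x ∈ l := by
      rw [onLine_supp hD h]; intro e; rw [e] at hy; simp at hy
    rw [mem_onLine] at h
    rw [Finset.mem_biUnion]
    refine ⟨l, Finset.mem_filter.mpr ⟨hl, hxl⟩, ?_⟩
    rw [Fintype.mem_piFinset]
    intro x'
    by_cases e : x' = x
    · subst e; simpa [hy] using h.1 x' hxl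
    · by_cases e' : x' ∈ l
      · simpa [e, e'] using h.1 x' e'
      · simpa [e, e'] using h.2 x' e'
  refine (Finset.card_le_card hsub).trans (Finset.card_biUnion_le.trans ?_)
  rw [← hL.deg x, ← smul_eq_mul ((L.filter (fun l => x ∈ l)).card), ← Finset.sum_const]
  refine Finset.sum_le_sum fun l hl => ?_
  rw [Finset.mem_filter] at hl
  rw [Fintype.card_piFinset, ← Finset.mul_prod_erase _ _ (Finset.mem_univ x)]
  simp only [if_true, hD.deg]
  apply Nat.mul_le_mul_left
  have : ∀ x' ∈ Finset.univ.erase x, (if x' = x then D.filter (fun d => y ∈ d) else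
      if x' ∈ l then D else {∅}).card = if x' ∈ l then Fintype.card Q else 1 := by
    intro x' hx'
    rw [if_neg (Finset.ne_of_mem_erase hx')]
    split_ifs
    · rw [hD.card_lines, hD.card_pts]
    · simp
  rw [Finset.prod_congr rfl this, Finset.prod_ite_mem, Finset.prod_const]
  have : Finset.univ.erase x ∩ l = l.erase x := by ext; simp
  rw [this, Finset.card_erase_of_mem hl.2, hL.card_line l hl.1]
  simp

/-- heavy values -/
def heavy (D : Finset (Finset Q)) (h : ℕ) : Finset (Finset Q) :=
  D ∪ Finset.univ.filter (fun Z => h ≤ Z.card)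

theorem kern_block {q s : ℕ} {L : Finset (Finset P)} {D : Finset (Finset Q)} (hL : IsPlane q L)
    (hD : IsPlane s D) (h b : ℕ) (hh : 2 * h ≤ 3 * (s + 1)) (hb : 2 * b ≤ 3 * (q + 1) + 1)
    (a : P → Finset Q)
    (hmeet : ∀ φ ∈ kern L D, ∃ x, (φ x ∩ a x).Nonempty)
    (hno : ∀ φ ∈ kern L D, ¬ ∀ x, φ x ⊆ a x) :
    (∃ l ∈ L, ∃ ψ ∈ onLine l (heavy D h) \ onLine l D, ∀ x, ψ x ⊆ a x) ∨
    (∃ U ∈ (Finset.univ : Finset P).powersetCard b,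
      ∃ ψ ∈ (onLine U (Finset.univ : Finset (Finset Q))).filter
        (fun ψ => ∀ x ∈ U, s + 1 ≤ (ψ x).card), ∀ x, ψ x ⊆ a x) := by
  classical
  set B : Finset P := Finset.univ.filter (fun x => ∀ d ∈ D, (d ∩ a x).Nonempty) with hB
  have hBmem : ∀ x, x ∈ B ↔ ∀ d ∈ D, (d ∩ a x).Nonempty := by intro x; simp [hB]
  have hBblock : ∀ l ∈ L, (l ∩ B).Nonempty := by
    intro l hl
    by_contra hcon
    have hx : ∀ x, ∃ d, x ∈ l → d ∈ D ∧ ¬ (d ∩ a x).Nonempty := by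
      intro x
      by_cases hxl : x ∈ l
      · have : x ∉ B := fun hxB => hcon ⟨x, Finset.mem_inter.mpr ⟨hxl, hxB⟩⟩
        rw [hBmem] at this
        push Not at this
        obtain ⟨d, hd, hd'⟩ := this
        exact ⟨d, fun _ => ⟨hd, by rw [hd']; simp⟩⟩
      · exact ⟨∅, fun h => absurd h hxl⟩
    choose f hf using hx
    obtain ⟨x, hx⟩ := hmeet (fun x => if x ∈ l then f x else ∅) (by
      rw [kern, Finset.mem_biUnion]
      refine ⟨l, hl, mem_onLine.mpr ⟨fun x hx => ?_, fun x hx => ?_⟩⟩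
      · simpa [hx] using (hf x hx).1
      · simp [hx])
    by_cases hxl : x ∈ l
    · simp only [hxl, if_true] at hx
      exact (hf x hxl).2 hx
    · simp [hxl] at hx
  by_cases hc : ∃ l ∈ L, l ⊆ B
  · left
    obtain ⟨l, hl, hlB⟩ := hc
    have hx : ∀ x, ∃ Z, x ∈ l → Z ∈ heavy D h ∧ Z ⊆ a x ∧ (Z ∈ D ∨ ∀ d ∈ D, ¬ d ⊆ a x) := by
      intro x
      by_cases hxl : x ∈ l
      · by_cases hd : ∃ d ∈ D, d ⊆ a x
        · obtain ⟨d, hd, hda⟩ := hd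
          exact ⟨d, fun _ => ⟨Finset.mem_union_left _ hd, hda, Or.inl hd⟩⟩
        · push Not at hd
          have := hD.block (a x) ((hBmem x).mp (hlB hxl)) hd
          refine ⟨a x, fun _ => ⟨Finset.mem_union_right _ ?_, subset_rfl, Or.inr hd⟩⟩
          simp; omega
      · exact ⟨∅, fun h => absurd h hxl⟩
    choose f hf using hx
    have hsub : ∀ x, (fun x => if x ∈ l then f x else ∅) x ⊆ a x := by
      intro x
      by_cases hx : x ∈ l
      · simpa [hx] using (hf x hx).2.1
      · simp [hx]
    refine ⟨l, hl, fun x => if x ∈ l then f x else ∅, ?_, hsub⟩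
    rw [Finset.mem_sdiff]
    constructor
    · refine mem_onLine.mpr ⟨fun x hx => ?_, fun x hx => ?_⟩
      · simpa [hx] using (hf x hx).1
      · simp [hx]
    · intro hmem
      exact hno _ (Finset.mem_biUnion.mpr ⟨l, hl, hmem⟩) hsub
  · right
    push Not at hc
    have h1 := hL.block B hBblock hc
    obtain ⟨U, hUB, hUc⟩ := Finset.exists_subset_card_eq (show b ≤ B.card by omega)
    refine ⟨U, Finset.mem_powersetCard.mpr ⟨Finset.subset_univ _, hUc⟩,
      fun x => if x ∈ U then a x else ∅, ?_, ?_⟩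
    · rw [Finset.mem_filter]
      refine ⟨mem_onLine.mpr ⟨fun x hx => by simp, fun x hx => by simp [hx]⟩, ?_⟩
      intro x hx
      simp only [hx, if_true]
      exact hD.block' _ ((hBmem x).mp (hUB hx))
    · intro x
      by_cases hx : x ∈ U <;> simp [hx]

end Kernels

/-- number of `r`-subsets of an `n`-set containing a given `j`-subset -/
def cc (n r j : ℕ) : ℕ := if j ≤ r then (n - j).choose (r - j) else 0

theorem card_sup_eq (n r : ℕ) (K : Finset ℕ) (hK : K ⊆ Finset.Icc 1 n) :
    (((Finset.Icc 1 n).powersetCard r).filter (fun A => K ⊆ A)).card = cc n r K.card := by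
  classical
  rw [cc]
  split_ifs with h
  · have : (((Finset.Icc 1 n).powersetCard r).filter (fun A => K ⊆ A)) =
        ((Finset.Icc 1 n \ K).powersetCard (r - K.card)).image (fun A => K ∪ A) := by
      ext A
      simp only [Finset.mem_filter, Finset.mem_powersetCard, Finset.mem_image]
      constructor
      · rintro ⟨⟨h1, h2⟩, h3⟩
        refine ⟨A \ K, ⟨Finset.sdiff_subset_sdiff h1 subset_rfl, ?_⟩, ?_⟩
        · rw [Finset.card_sdiff_of_subset h3, h2]
        · rw [Finset.union_sdiff_of_subset h3]
      · rintro ⟨E, ⟨h1, h2⟩, rfl⟩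
        have hd : Disjoint K E := by
          rw [Finset.disjoint_right]; intro x hx; exact (Finset.mem_sdiff.mp (h1 hx)).2
        refine ⟨⟨Finset.union_subset hK (h1.trans Finset.sdiff_subset), ?_⟩,
          Finset.subset_union_left⟩
        rw [Finset.card_union_of_disjoint hd, h2]; omega
    rw [this, Finset.card_image_of_injOn, Finset.card_powersetCard,
      Finset.card_sdiff_of_subset hK]
    · simp
    · intro E hE E' hE' he
      simp only [Finset.mem_coe,
        Finset.mem_powersetCard] at hE hE'
      have hd : ∀ E : Finset ℕ, E ⊆ Finset.Icc 1 n \ K → (K ∪ E) \ K = E := by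
        intro E hE
        rw [Finset.union_sdiff_left]
        rw [Finset.sdiff_eq_self_iff_disjoint, Finset.disjoint_left]
        intro x hx; exact (Finset.mem_sdiff.mp (hE hx)).2
      simp only at he
      rw [← hd E hE.1, ← hd E' hE'.1, he]
  · rw [Finset.card_eq_zero, Finset.filter_eq_empty_iff]
    intro A hA hKA
    have := Finset.card_le_card hKA
    rw [(Finset.mem_powersetCard.mp hA).2] at this
    omega

theorem cc_rec (n r j : ℕ) (hr : r ≤ n) : (n - j) * cc n r (j + 1) = (r - j) * cc n r j := by
  rw [cc, cc]
  by_cases h : j + 1 ≤ r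
  · rw [if_pos h, if_pos (by omega)]
    obtain ⟨m, rfl⟩ : ∃ m, n = m + 1 + j := ⟨n - j - 1, by omega⟩
    obtain ⟨t, rfl⟩ : ∃ t, r = t + 1 + j := ⟨r - j - 1, by omega⟩
    have e1 : m + 1 + j - j = m + 1 := by omega
    have e2 : t + 1 + j - j = t + 1 := by omega
    have e3 : m + 1 + j - (j + 1) = m := by omega
    have e4 : t + 1 + j - (j + 1) = t := by omega
    rw [e1, e2, e3, e4, Nat.add_one_mul_choose_eq, mul_comm]
  · rw [if_neg h]
    have : r - j = 0 := by omega
    rw [this]; simp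

theorem cc_step (n r j : ℕ) (hr : 0 < r) (hn : r ^ 2 ≤ n) : cc n r (j + 1) * r ≤ cc n r j := by
  have hrn : r ≤ n := by nlinarith
  by_cases h : j < r
  · have h1 := cc_rec n r j hrn
    have h2 : r * (r - j) ≤ n - j := by
      obtain ⟨t, rfl⟩ : ∃ t, r = t + j := ⟨r - j, by omega⟩
      rw [Nat.add_sub_cancel]
      apply Nat.le_sub_of_add_le
      nlinarith
    have h3 : 0 < r - j := by omega
    have h4 : (r - j) * (cc n r (j + 1) * r) ≤ (r - j) * cc n r j := by
      rw [← h1]; nlinarith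
    exact Nat.le_of_mul_le_mul_left h4 h3
  · have : cc n r (j + 1) = 0 := by rw [cc, if_neg (by omega)]
    rw [this]; simp

theorem cc_pow (n r j i : ℕ) (hr : 0 < r) (hn : r ^ 2 ≤ n) :
    cc n r (j + i) * r ^ i ≤ cc n r j := by
  induction i with
  | zero => simp
  | succ i ih =>
    have := cc_step n r (j + i) hr hn
    calc cc n r (j + (i + 1)) * r ^ (i + 1) = (cc n r (j + i + 1) * r) * r ^ i := by
          rw [pow_succ, ← add_assoc]; ring
      _ ≤ cc n r (j + i) * r ^ i := Nat.mul_le_mul_right _ this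
      _ ≤ _ := ih

theorem cc_real (n r j i : ℕ) (hr : 0 < r) (hn : r ^ 2 ≤ n) (j' : ℕ) (hj : j + i ≤ j') :
    (cc n r j' : ℝ) ≤ cc n r j * ((r : ℝ) ^ i)⁻¹ := by
  obtain ⟨t, rfl⟩ : ∃ t, j' = j + (i + t) := ⟨j' - j - i, by omega⟩
  have h1 := cc_pow n r j (i + t) hr hn
  have h2 : cc n r (j + (i + t)) * r ^ i ≤ cc n r j := by
    refine le_trans (Nat.mul_le_mul_left _ (Nat.pow_le_pow_right hr (by omega))) h1
  have hrr : (0 : ℝ) < (r : ℝ) ^ i := by positivity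
  rw [← div_eq_mul_inv, le_div_iff₀ hrr]
  exact_mod_cast h2

theorem cc_anti (n r : ℕ) (hr : 0 < r) (hn : r ^ 2 ≤ n) : Antitone (cc n r) := by
  intro a b hab
  have := cc_real n r a 0 hr hn b (by omega)
  simp at this; exact this

theorem one_add_pow_aux (t : ℝ) (ht : 0 ≤ t) (m : ℕ) (h : (m : ℝ) * t ≤ 1) :
    (1 + t) ^ m ≤ 1 + 2 * (m * t) := by
  have h1 : (1 + t) ^ m ≤ Real.exp (m * t) := by
    rw [Real.exp_nat_mul]
    apply pow_le_pow_left₀ (by positivity)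
    linarith [Real.add_one_le_exp t]
  have h2 := Real.abs_exp_sub_one_le (x := m * t) (by rw [abs_of_nonneg (by positivity)]; exact h)
  rw [abs_of_nonneg (a := (m : ℝ) * t) (by positivity)] at h2
  linarith [le_abs_self (Real.exp (m * t) - 1)]

section Counting

variable {P Q : Type} [Fintype P] [DecidableEq P] [Fintype Q] [DecidableEq Q]

theorem weight_bound {q s : ℕ} {L : Finset (Finset P)} {D : Finset (Finset Q)}
    (hL : IsPlane q L) (hD : IsPlane s D) (n r : ℕ) (hr : 0 < r) (hn : r ^ 2 ≤ n)
    {l : Finset P} (hl : l ∈ L) {ψ : P → Finset Q} (hψ : ψ ∈ onLine l (heavy D (s + 13))) :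
    (cc n r (∑ x, (ψ x).card) : ℝ) ≤ cc n r ((q + 1) * (s + 1)) *
      ∏ x, (if s + 13 ≤ (ψ x).card then ((r : ℝ) ^ 12)⁻¹ else 1) := by
  rw [mem_onLine] at hψ
  set H : Finset P := Finset.univ.filter (fun x => s + 13 ≤ (ψ x).card) with hH
  have h1 : ∏ x, (if s + 13 ≤ (ψ x).card then ((r : ℝ) ^ 12)⁻¹ else 1) =
      ((r : ℝ) ^ (12 * H.card))⁻¹ := by
    rw [← Finset.prod_filter, Finset.prod_const, pow_mul, inv_pow]
  rw [h1]
  apply cc_real n r _ _ hr hn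
  have h2 : ∀ x, (if x ∈ l then s + 1 else 0) + (if s + 13 ≤ (ψ x).card then 12 else 0) ≤
      (ψ x).card := by
    intro x
    by_cases hx : x ∈ l
    · have := hψ.1 x hx
      rw [heavy, Finset.mem_union] at this
      rcases this with h | h
      · have := hD.card_line _ h
        simp only [hx, if_true]; split_ifs <;> omega
      · have h := (Finset.mem_filter.mp h).2
        simp only [hx, h, if_true]
    · simp [hx, hψ.2 x hx]
  have h3 := Finset.sum_le_sum (fun x (_ : x ∈ Finset.univ) => h2 x)
  rw [Finset.sum_add_distrib, Finset.sum_ite_mem, Finset.univ_inter, Finset.sum_const,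
    hL.card_line l hl, ← Finset.sum_filter, Finset.sum_const] at h3
  simp only [smul_eq_mul] at h3
  rw [← hH] at h3
  omega

theorem caseA_line {q s : ℕ} {L : Finset (Finset P)} {D : Finset (Finset Q)}
    (hL : IsPlane q L) (hD : IsPlane s D) (n r : ℕ) (hr : 0 < r) (hn : r ^ 2 ≤ n)
    (hq : q + 1 ≤ r) (hQ : 2 ^ Fintype.card Q ≤ r)
    {l : Finset P} (hl : l ∈ L) :
    ∑ ψ ∈ onLine l (heavy D (s + 13)) \ onLine l D, (cc n r (∑ x, (ψ x).card) : ℝ) ≤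
      cc n r ((q + 1) * (s + 1)) * (Fintype.card Q : ℝ) ^ (q + 1) * (2 * ((r : ℝ) ^ 10)⁻¹) := by
  classical
  have hsub : onLine l D ⊆ onLine l (heavy D (s + 13)) := by
    intro ψ h
    rw [mem_onLine] at h ⊢
    exact ⟨fun x hx => Finset.mem_union_left _ (h.1 x hx), h.2⟩
  set w : Finset Q → ℝ := fun Z => if s + 13 ≤ Z.card then ((r : ℝ) ^ 12)⁻¹ else 1 with hw
  have hsum : ∀ E : Finset (Finset Q), ∑ ψ ∈ onLine l E, ∏ x, w (ψ x) =
      (∑ Z ∈ E, w Z) ^ (q + 1) := by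
    intro E
    rw [onLine, ← Finset.prod_univ_sum (fun x => if x ∈ l then E else {∅}) (fun _ Z => w Z)]
    have : ∀ x : P, ∑ Z ∈ (if x ∈ l then E else {∅}), w Z = if x ∈ l then ∑ Z ∈ E, w Z else 1 := by
      intro x; split_ifs
      · rfl
      · simp [hw]
    simp_rw [this]
    rw [Finset.prod_ite_mem, Finset.univ_inter, Finset.prod_const, hL.card_line l hl]
  have hD1 : ∑ Z ∈ D, w Z = Fintype.card Q := by
    rw [hD.card_pts, ← hD.card_lines, Finset.card_eq_sum_ones]
    push_cast
    refine Finset.sum_congr rfl fun Z hZ => ?_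
    rw [hw]; simp only; rw [if_neg]; rw [hD.card_line Z hZ]; omega
  set M : ℝ := ((Fintype.card Q : ℕ) : ℝ) with hM
  have hM1 : 1 ≤ M := by
    rw [hM]; have := hD.card_pts; rw [this]; exact_mod_cast Nat.le_add_left _ _
  have hr1 : (1 : ℝ) ≤ r := by exact_mod_cast hr
  have hr0 : (0 : ℝ) < r := by linarith
  have hwnn : ∀ Z, 0 ≤ w Z := by intro Z; rw [hw]; simp only; split_ifs <;> positivity
  set τ : ℝ := ((r : ℝ) ^ 11)⁻¹ with hτ
  have hD2 : ∑ Z ∈ heavy D (s + 13), w Z ≤ M + τ := by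
    rw [heavy]
    refine le_trans (Finset.sum_union_inter (s₁ := D) (f := w) ▸ le_add_of_nonneg_right
      (Finset.sum_nonneg fun Z _ => hwnn Z)) ?_
    rw [hD1]
    apply add_le_add le_rfl
    have : ∀ Z ∈ Finset.univ.filter (fun Z : Finset Q => s + 13 ≤ Z.card),
        w Z = ((r : ℝ) ^ 12)⁻¹ := by
      intro Z hZ
      rw [hw]; simp only; rw [if_pos (Finset.mem_filter.mp hZ).2]
    rw [Finset.sum_congr rfl this, Finset.sum_const, nsmul_eq_mul]
    have h2 : ((Finset.univ.filter (fun Z : Finset Q => s + 13 ≤ Z.card)).card : ℝ) ≤ r := by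
      have : (Finset.univ.filter (fun Z : Finset Q => s + 13 ≤ Z.card)).card ≤ r := by
        refine le_trans (Finset.card_filter_le _ _) ?_
        rw [Finset.card_univ, Fintype.card_finset]; exact hQ
      exact_mod_cast this
    calc _ ≤ (r : ℝ) * ((r : ℝ) ^ 12)⁻¹ := by gcongr
      _ = τ := by rw [hτ]; field_simp
  have h0 : ∑ ψ ∈ onLine l (heavy D (s + 13)) \ onLine l D, (cc n r (∑ x, (ψ x).card) : ℝ) ≤
      cc n r ((q + 1) * (s + 1)) *
      ∑ ψ ∈ onLine l (heavy D (s + 13)) \ onLine l D, ∏ x, w (ψ x) := by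
    rw [Finset.mul_sum]
    refine Finset.sum_le_sum fun ψ hψ => ?_
    exact weight_bound hL hD n r hr hn hl (Finset.mem_sdiff.mp hψ).1
  refine h0.trans ?_
  rw [mul_assoc]
  apply mul_le_mul_of_nonneg_left _ (Nat.cast_nonneg _)
  have h1 := Finset.sum_sdiff (f := fun ψ => ∏ x, w (ψ x)) hsub
  rw [hsum, hsum, hD1] at h1
  have hnn : 0 ≤ ∑ Z ∈ heavy D (s + 13), w Z := Finset.sum_nonneg fun Z _ => hwnn Z
  have h3 : (∑ Z ∈ heavy D (s + 13), w Z) ^ (q + 1) ≤ (M + τ) ^ (q + 1) :=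
    pow_le_pow_left₀ hnn hD2 _
  have hτ0 : 0 ≤ τ := by positivity
  have h4 : (M + τ) ^ (q + 1) ≤ M ^ (q + 1) * (1 + τ) ^ (q + 1) := by
    rw [← mul_pow]
    apply pow_le_pow_left₀ (by positivity)
    nlinarith
  have hqr : ((q + 1 : ℕ) : ℝ) ≤ r := by exact_mod_cast hq
  have hqτ : ((q + 1 : ℕ) : ℝ) * τ ≤ ((r : ℝ) ^ 10)⁻¹ := by
    calc _ ≤ (r : ℝ) * τ := by gcongr
      _ = _ := by rw [hτ]; field_simp
  have hle1 : ((r : ℝ) ^ 10)⁻¹ ≤ 1 := inv_le_one_of_one_le₀ (one_le_pow₀ hr1)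
  have h5 := one_add_pow_aux τ hτ0 (q + 1) (hqτ.trans hle1)
  have h6 : M ^ (q + 1) * (1 + τ) ^ (q + 1) ≤ M ^ (q + 1) * (1 + 2 * ((r : ℝ) ^ 10)⁻¹) := by
    apply mul_le_mul_of_nonneg_left _ (by positivity)
    linarith
  nlinarith

theorem caseB_sum {q s : ℕ} (n r : ℕ) (hr : 0 < r) (hn : r ^ 2 ≤ n)
    (hP : Fintype.card P ≤ r ^ 2) (hQ : 2 ^ Fintype.card Q ≤ r) (hs : 23 ≤ s)
    (b : ℕ) (hb : 3 * (q + 1) ≤ 2 * b) :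
    ∑ U ∈ (Finset.univ : Finset P).powersetCard b,
      ∑ ψ ∈ (onLine U (Finset.univ : Finset (Finset Q))).filter
        (fun ψ => ∀ x ∈ U, s + 1 ≤ (ψ x).card), (cc n r (∑ x, (ψ x).card) : ℝ) ≤
      cc n r ((q + 1) * (s + 1)) * ((r : ℝ) ^ 5)⁻¹ := by
  have hr1 : (1 : ℝ) ≤ r := by exact_mod_cast hr
  have hr0 : (0 : ℝ) < r := by linarith
  set c : ℝ := ((cc n r ((q + 1) * (s + 1)) : ℕ) : ℝ) with hc
  have hterm : ∀ U ∈ (Finset.univ : Finset P).powersetCard b,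
      ∀ ψ ∈ (onLine U (Finset.univ : Finset (Finset Q))).filter
        (fun ψ => ∀ x ∈ U, s + 1 ≤ (ψ x).card), (cc n r (∑ x, (ψ x).card) : ℝ) ≤
      c * ((r : ℝ) ^ (8 * b))⁻¹ := by
    intro U hU ψ hψ
    apply cc_real n r _ _ hr hn
    have h1 : b * (s + 1) ≤ ∑ x, (ψ x).card := by
      calc b * (s + 1) = ∑ x ∈ U, (s + 1) := by
            rw [Finset.sum_const, (Finset.mem_powersetCard.mp hU).2, smul_eq_mul]
        _ ≤ ∑ x ∈ U, (ψ x).card := Finset.sum_le_sum (Finset.mem_filter.mp hψ).2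
        _ ≤ _ := Finset.sum_le_sum_of_subset (Finset.subset_univ _)
    obtain ⟨t, rfl⟩ : ∃ t, s = t + 23 := ⟨s - 23, by omega⟩
    nlinarith
  have hinner : ∀ U ∈ (Finset.univ : Finset P).powersetCard b,
      ∑ ψ ∈ (onLine U (Finset.univ : Finset (Finset Q))).filter
        (fun ψ => ∀ x ∈ U, s + 1 ≤ (ψ x).card), (cc n r (∑ x, (ψ x).card) : ℝ) ≤
      (r : ℝ) ^ b * (c * ((r : ℝ) ^ (8 * b))⁻¹) := by
    intro U hU
    refine (Finset.sum_le_card_nsmul _ _ _ (hterm U hU)).trans ?_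
    rw [nsmul_eq_mul]
    apply mul_le_mul_of_nonneg_right _ (by positivity)
    have : ((onLine U (Finset.univ : Finset (Finset Q))).filter
        (fun ψ => ∀ x ∈ U, s + 1 ≤ (ψ x).card)).card ≤ r ^ b := by
      refine (Finset.card_filter_le _ _).trans ?_
      rw [card_onLine, (Finset.mem_powersetCard.mp hU).2, Finset.card_univ, Fintype.card_finset]
      exact Nat.pow_le_pow_left hQ _
    exact_mod_cast this
  refine (Finset.sum_le_card_nsmul _ _ _ hinner).trans ?_
  rw [nsmul_eq_mul, Finset.card_powersetCard, Finset.card_univ]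
  have h1 : (((Fintype.card P).choose b : ℕ) : ℝ) ≤ (r : ℝ) ^ (2 * b) := by
    have : (Fintype.card P).choose b ≤ r ^ (2 * b) := by
      refine (Nat.choose_le_pow _ _).trans ?_
      rw [pow_mul]; exact Nat.pow_le_pow_left hP _
    exact_mod_cast this
  have hb1 : 1 ≤ b := by omega
  calc (((Fintype.card P).choose b : ℕ) : ℝ) * ((r : ℝ) ^ b * (c * ((r : ℝ) ^ (8 * b))⁻¹))
      ≤ (r : ℝ) ^ (2 * b) * ((r : ℝ) ^ b * (c * ((r : ℝ) ^ (8 * b))⁻¹)) := by gcongr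
    _ = c * ((r : ℝ) ^ (5 * b))⁻¹ := by
        have : 8 * b = 2 * b + b + 5 * b := by ring
        rw [this, pow_add, pow_add]; field_simp
    _ ≤ c * ((r : ℝ) ^ 5)⁻¹ := by
        gcongr
        omega

end Counting

section Embedding

variable {P Q : Type} [Fintype P] [DecidableEq P] [Fintype Q] [DecidableEq Q]

/-- the subset of `ℕ` encoded by a function -/
def emb (ι : P × Q ↪ ℕ) (ψ : P → Finset Q) : Finset ℕ :=
  (Finset.univ.filter (fun z : P × Q => z.2 ∈ ψ z.1)).map ι

/-- the trace of a subset of `ℕ` -/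
def tr (ι : P × Q ↪ ℕ) (A : Finset ℕ) (x : P) : Finset Q :=
  Finset.univ.filter (fun y => ι (x, y) ∈ A)

theorem mem_tr {ι : P × Q ↪ ℕ} {A : Finset ℕ} {x : P} {y : Q} :
    y ∈ tr ι A x ↔ ι (x, y) ∈ A := by simp [tr]

theorem mem_emb {ι : P × Q ↪ ℕ} {ψ : P → Finset Q} {x : P} {y : Q} :
    ι (x, y) ∈ emb ι ψ ↔ y ∈ ψ x := by simp [emb]

theorem mem_emb' {ι : P × Q ↪ ℕ} {ψ : P → Finset Q} {i : ℕ} :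
    i ∈ emb ι ψ ↔ ∃ x y, y ∈ ψ x ∧ ι (x, y) = i := by
  simp [emb]

theorem card_emb (ι : P × Q ↪ ℕ) (ψ : P → Finset Q) :
    (emb ι ψ).card = ∑ x, (ψ x).card := by
  rw [emb, Finset.card_map, Finset.card_filter, Fintype.sum_prod_type]
  refine Finset.sum_congr rfl fun x _ => ?_
  simp

theorem emb_subset_iff {ι : P × Q ↪ ℕ} {ψ : P → Finset Q} {A : Finset ℕ} :
    emb ι ψ ⊆ A ↔ ∀ x, ψ x ⊆ tr ι A x := by
  constructor
  · intro h x y hy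
    exact mem_tr.mpr (h (mem_emb.mpr hy))
  · intro h i hi
    obtain ⟨x, y, hy, rfl⟩ := mem_emb'.mp hi
    exact mem_tr.mp (h x hy)

theorem emb_inter_iff {ι : P × Q ↪ ℕ} {ψ : P → Finset Q} {A : Finset ℕ} :
    (emb ι ψ ∩ A).Nonempty ↔ ∃ x, (ψ x ∩ tr ι A x).Nonempty := by
  constructor
  · rintro ⟨i, hi⟩
    rw [Finset.mem_inter] at hi
    obtain ⟨x, y, hy, rfl⟩ := mem_emb'.mp hi.1
    exact ⟨x, y, Finset.mem_inter.mpr ⟨hy, mem_tr.mpr hi.2⟩⟩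
  · rintro ⟨x, y, hy⟩
    rw [Finset.mem_inter] at hy
    exact ⟨ι (x, y), Finset.mem_inter.mpr ⟨mem_emb.mpr hy.1, mem_tr.mp hy.2⟩⟩

theorem emb_subset_Icc {ι : P × Q ↪ ℕ} {n : ℕ} (hι : ∀ z, ι z ∈ Finset.Icc 1 n)
    (ψ : P → Finset Q) : emb ι ψ ⊆ Finset.Icc 1 n := by
  intro i hi
  obtain ⟨x, y, hy, rfl⟩ := mem_emb'.mp hi
  exact hι _

theorem card_emb_sup {ι : P × Q ↪ ℕ} {n : ℕ} (hι : ∀ z, ι z ∈ Finset.Icc 1 n) (r : ℕ)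
    (ψ : P → Finset Q) :
    (((Finset.Icc 1 n).powersetCard r).filter (fun A => emb ι ψ ⊆ A)).card =
      cc n r (∑ x, (ψ x).card) := by
  rw [card_sup_eq n r _ (emb_subset_Icc hι ψ), card_emb]

/-- `r`-sets meeting every kernel and containing none -/
def badSets (ι : P × Q ↪ ℕ) (L : Finset (Finset P)) (D : Finset (Finset Q)) (n r : ℕ) :
    Finset (Finset ℕ) :=
  ((Finset.Icc 1 n).powersetCard r).filter (fun A =>
    (∀ φ ∈ kern L D, (emb ι φ ∩ A).Nonempty) ∧ ∀ φ ∈ kern L D, ¬ emb ι φ ⊆ A)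

theorem badSets_card {q s : ℕ} {L : Finset (Finset P)} {D : Finset (Finset Q)}
    (hL : IsPlane q L) (hD : IsPlane s D) (n r : ℕ) (hr : 0 < r) (hn : r ^ 2 ≤ n)
    (hq : q + 1 ≤ r) (hP : Fintype.card P ≤ r ^ 2) (hQ : 2 ^ Fintype.card Q ≤ r) (hs : 23 ≤ s)
    {ι : P × Q ↪ ℕ} (hι : ∀ z, ι z ∈ Finset.Icc 1 n) :
    ((badSets ι L D n r).card : ℝ) ≤ (kern L D).card * cc n r ((q + 1) * (s + 1)) *
      (3 * ((r : ℝ) ^ 5)⁻¹) := by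
  classical
  obtain ⟨b, hb1, hb2⟩ : ∃ b, 3 * (q + 1) ≤ 2 * b ∧ 2 * b ≤ 3 * (q + 1) + 1 :=
    ⟨(3 * (q + 1) + 1) / 2, by omega, by omega⟩
  set R := (Finset.Icc 1 n).powersetCard r with hR
  have hsub : badSets ι L D n r ⊆
      (L.biUnion fun l => (onLine l (heavy D (s + 13)) \ onLine l D).biUnion
        fun ψ => R.filter (fun A => emb ι ψ ⊆ A)) ∪
      (((Finset.univ : Finset P).powersetCard b).biUnion fun U =>
        ((onLine U (Finset.univ : Finset (Finset Q))).filter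
        (fun ψ => ∀ x ∈ U, s + 1 ≤ (ψ x).card)).biUnion
        fun ψ => R.filter (fun A => emb ι ψ ⊆ A)) := by
    intro A hA
    rw [badSets, Finset.mem_filter] at hA
    obtain ⟨hAR, h1, h2⟩ := hA
    rcases kern_block hL hD (s + 13) b (by omega) hb2 (tr ι A)
      (fun φ hφ => emb_inter_iff.mp (h1 φ hφ))
      (fun φ hφ h => h2 φ hφ (emb_subset_iff.mpr h)) with
      ⟨l, hl, ψ, hψ, h⟩ | ⟨l, hl, ψ, hψ, h⟩
    · refine Finset.mem_union_left _ (Finset.mem_biUnion.mpr ⟨l, hl,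
        Finset.mem_biUnion.mpr ⟨ψ, hψ, Finset.mem_filter.mpr ⟨hAR, emb_subset_iff.mpr h⟩⟩⟩)
    · refine Finset.mem_union_right _ (Finset.mem_biUnion.mpr ⟨l, hl,
        Finset.mem_biUnion.mpr ⟨ψ, hψ, Finset.mem_filter.mpr ⟨hAR, emb_subset_iff.mpr h⟩⟩⟩)
  have h1 : (badSets ι L D n r).card ≤
      ∑ l ∈ L, ∑ ψ ∈ onLine l (heavy D (s + 13)) \ onLine l D, cc n r (∑ x, (ψ x).card) +
      ∑ U ∈ (Finset.univ : Finset P).powersetCard b,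
      ∑ ψ ∈ (onLine U (Finset.univ : Finset (Finset Q))).filter
        (fun ψ => ∀ x ∈ U, s + 1 ≤ (ψ x).card), cc n r (∑ x, (ψ x).card) := by
    refine (Finset.card_le_card hsub).trans ((Finset.card_union_le _ _).trans ?_)
    refine Nat.add_le_add ?_ ?_
    · refine Finset.card_biUnion_le.trans (Finset.sum_le_sum fun l _ => ?_)
      refine Finset.card_biUnion_le.trans (Finset.sum_le_sum fun ψ _ => ?_)
      rw [hR, card_emb_sup hι]
    · refine Finset.card_biUnion_le.trans (Finset.sum_le_sum fun l _ => ?_)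
      refine Finset.card_biUnion_le.trans (Finset.sum_le_sum fun ψ _ => ?_)
      rw [hR, card_emb_sup hι]
  have h2 : ((badSets ι L D n r).card : ℝ) ≤
      ∑ l ∈ L, ∑ ψ ∈ onLine l (heavy D (s + 13)) \ onLine l D,
        (cc n r (∑ x, (ψ x).card) : ℝ) +
      ∑ U ∈ (Finset.univ : Finset P).powersetCard b,
      ∑ ψ ∈ (onLine U (Finset.univ : Finset (Finset Q))).filter
        (fun ψ => ∀ x ∈ U, s + 1 ≤ (ψ x).card), (cc n r (∑ x, (ψ x).card) : ℝ) := by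
    exact_mod_cast h1
  have h3 := caseB_sum (P := P) (Q := Q) (q := q) (s := s) n r hr hn hP hQ hs b hb1
  have h4 := Finset.sum_le_sum (fun l hl => caseA_line hL hD n r hr hn hq hQ (l := l) hl)
  rw [Finset.sum_const, hL.card_lines, ← hL.card_pts, nsmul_eq_mul] at h4
  have hN : ((kern L D).card : ℝ) = Fintype.card P * (Fintype.card Q : ℝ) ^ (q + 1) := by
    rw [kern_card hL hD]; push_cast; ring
  have hN1 : (1 : ℝ) ≤ (kern L D).card := by
    have : 1 ≤ (kern L D).card := by
      rw [kern_card hL hD, hL.card_pts, hD.card_pts]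
      exact Nat.mul_pos (by omega) (Nat.pow_pos (by omega))
    exact_mod_cast this
  set c : ℝ := ((cc n r ((q + 1) * (s + 1)) : ℕ) : ℝ) with hc
  set N : ℝ := (((kern L D).card : ℕ) : ℝ) with hN'
  have hr1 : (1 : ℝ) ≤ r := by exact_mod_cast hr
  have hr0 : (0 : ℝ) < r := by linarith
  have hc0 : 0 ≤ c := Nat.cast_nonneg _
  have h5 : (Fintype.card P : ℝ) * (c * (Fintype.card Q : ℝ) ^ (q + 1) * (2 * ((r : ℝ) ^ 10)⁻¹)) ≤
      N * c * (2 * ((r : ℝ) ^ 5)⁻¹) := by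
    have : ((r : ℝ) ^ 10)⁻¹ ≤ ((r : ℝ) ^ 5)⁻¹ := by
      gcongr
      · omega
    calc _ = N * c * (2 * ((r : ℝ) ^ 10)⁻¹) := by rw [hN]; ring
      _ ≤ _ := by gcongr
  have h6 : c * ((r : ℝ) ^ 5)⁻¹ ≤ N * c * ((r : ℝ) ^ 5)⁻¹ := by
    apply mul_le_mul_of_nonneg_right _ (by positivity)
    nlinarith
  calc _ ≤ _ := h2
    _ ≤ N * c * (2 * ((r : ℝ) ^ 5)⁻¹) + N * c * ((r : ℝ) ^ 5)⁻¹ :=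
        add_le_add (h4.trans h5) (h3.trans h6)
    _ = _ := by ring

theorem upper_deg {q s : ℕ} {L : Finset (Finset P)} {D : Finset (Finset Q)}
    (hL : IsPlane q L) (hD : IsPlane s D) (n r : ℕ) (hr : 0 < r) (hn : r ^ 2 ≤ n)
    {ι : P × Q ↪ ℕ} (hι : ∀ z, ι z ∈ Finset.Icc 1 n)
    (F : Finset (Finset ℕ)) (hF : F ⊆ (Finset.Icc 1 n).powersetCard r)
    (hFm : ∀ A ∈ F, ∀ φ ∈ kern L D, (emb ι φ ∩ A).Nonempty)
    (i : ℕ) (hi : i ∈ Finset.Icc 1 n) :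
    (F.filter (fun A => i ∈ A)).card ≤
      (q + 1) * ((s + 1) * Fintype.card Q ^ q) * cc n r ((q + 1) * (s + 1)) +
      (kern L D).card * cc n r ((q + 1) * (s + 1) + 1) + (badSets ι L D n r).card := by
  classical
  set R := (Finset.Icc 1 n).powersetCard r with hR
  set k := (q + 1) * (s + 1) with hk
  have hsub : F.filter (fun A => i ∈ A) ⊆ ((kern L D).biUnion
      (fun φ => R.filter (fun A => insert i (emb ι φ) ⊆ A))) ∪ badSets ι L D n r := by
    intro A hA
    rw [Finset.mem_filter] at hA
    by_cases h : ∃ φ ∈ kern L D, emb ι φ ⊆ A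
    · obtain ⟨φ, hφ, hφA⟩ := h
      refine Finset.mem_union_left _ (Finset.mem_biUnion.mpr ⟨φ, hφ, Finset.mem_filter.mpr
        ⟨hF hA.1, Finset.insert_subset hA.2 hφA⟩⟩)
    · push Not at h
      exact Finset.mem_union_right _ (Finset.mem_filter.mpr ⟨hF hA.1, hFm A hA.1, h⟩)
  refine (Finset.card_le_card hsub).trans ((Finset.card_union_le _ _).trans ?_)
  apply Nat.add_le_add_right
  refine Finset.card_biUnion_le.trans ?_
  have hterm : ∀ φ ∈ kern L D, (R.filter (fun A => insert i (emb ι φ) ⊆ A)).card ≤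
      (if i ∈ emb ι φ then cc n r k else 0) + cc n r (k + 1) := by
    intro φ hφ
    have hc : (emb ι φ).card = k := by rw [card_emb, kern_size hL hD hφ]
    rw [hR, card_sup_eq n r _ (Finset.insert_subset hi (emb_subset_Icc hι φ))]
    by_cases h : i ∈ emb ι φ
    · rw [if_pos h, Finset.insert_eq_of_mem h, hc]; omega
    · rw [if_neg h, Finset.card_insert_of_notMem h, hc]; omega
  refine (Finset.sum_le_sum hterm).trans ?_
  rw [Finset.sum_add_distrib, Finset.sum_const, smul_eq_mul, ← Finset.sum_filter,
    Finset.sum_const, smul_eq_mul]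
  apply Nat.add_le_add_right
  apply Nat.mul_le_mul_right
  by_cases h : ∃ x y, ι (x, y) = i
  · obtain ⟨x, y, rfl⟩ := h
    simp_rw [mem_emb]
    exact kern_deg hL hD x y
  · have : (kern L D).filter (fun φ => i ∈ emb ι φ) = ∅ := by
      rw [Finset.filter_eq_empty_iff]
      intro φ _ hm
      obtain ⟨x, y, -, e⟩ := mem_emb'.mp hm
      exact h ⟨x, y, e⟩
    rw [this]; simp

theorem lower_deg {q s : ℕ} {L : Finset (Finset P)} {D : Finset (Finset Q)}
    (hL : IsPlane q L) (hD : IsPlane s D) (n r : ℕ) (hr : 0 < r) (hn : r ^ 2 ≤ n)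
    {ι : P × Q ↪ ℕ} (hι : ∀ z, ι z ∈ Finset.Icc 1 n)
    (F : Finset (Finset ℕ))
    (hF : ∀ A ∈ (Finset.Icc 1 n).powersetCard r, ∀ φ ∈ kern L D, emb ι φ ⊆ A → A ∈ F)
    (i : ℕ) (hi : i ∈ Finset.Icc 1 n) :
    (kern L D).card * cc n r ((q + 1) * (s + 1) + 1) ≤ (F.filter (fun A => i ∈ A)).card +
      (kern L D).card * (Fintype.card P * 2 ^ Fintype.card Q *
        cc n r ((q + 1) * (s + 1) + s)) := by
  classical
  set R := (Finset.Icc 1 n).powersetCard r with hR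
  set k := (q + 1) * (s + 1) with hk
  set V : (P → Finset Q) → Finset (Finset ℕ) := fun φ =>
    (R.filter (fun A => insert i (emb ι φ) ⊆ A)).filter
      (fun A => ∀ φ' ∈ kern L D, φ' ≠ φ → ¬ emb ι φ' ⊆ A) with hV
  have hV1 : ((kern L D).biUnion V).card ≤ (F.filter (fun A => i ∈ A)).card := by
    apply Finset.card_le_card
    intro A hA
    obtain ⟨φ, hφ, hA⟩ := Finset.mem_biUnion.mp hA
    rw [hV, Finset.mem_filter, Finset.mem_filter] at hA
    rw [Finset.mem_filter]
    exact ⟨hF A hA.1.1 φ hφ ((Finset.subset_insert _ _).trans hA.1.2),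
      hA.1.2 (Finset.mem_insert_self _ _)⟩
  rw [Finset.card_biUnion] at hV1
  · have hterm : ∀ φ ∈ kern L D, cc n r (k + 1) ≤ (V φ).card +
        Fintype.card P * 2 ^ Fintype.card Q * cc n r (k + s) := by
      intro φ hφ
      have hc : (emb ι φ).card = k := by rw [card_emb, kern_size hL hD hφ]
      have h1 : cc n r (k + 1) ≤ (R.filter (fun A => insert i (emb ι φ) ⊆ A)).card := by
        rw [hR, card_sup_eq n r _ (Finset.insert_subset hi (emb_subset_Icc hι φ))]
        apply cc_anti n r hr hn
        rw [← hc]; exact Finset.card_insert_le _ _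
      refine h1.trans ?_
      rw [← Finset.card_filter_add_card_filter_not
        (p := fun A => ∀ φ' ∈ kern L D, φ' ≠ φ → ¬ emb ι φ' ⊆ A)]
      apply Nat.add_le_add_left
      have hsub : ((R.filter (fun A => insert i (emb ι φ) ⊆ A)).filter
          (fun A => ¬ ∀ φ' ∈ kern L D, φ' ≠ φ → ¬ emb ι φ' ⊆ A)) ⊆
          ((Finset.univ : Finset (P × Finset Q)).filter
            (fun z => s ≤ z.2.card ∧ Disjoint (φ z.1) z.2)).biUnion
          (fun z => R.filter (fun A => emb ι (fun x => if x = z.1 then φ x ∪ z.2 else φ x) ⊆ A))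
          := by
        intro A hA
        rw [Finset.mem_filter, Finset.mem_filter] at hA
        obtain ⟨⟨hAR, hins⟩, hex⟩ := hA
        push Not at hex
        obtain ⟨φ', hφ', hne, hsubA⟩ := hex
        obtain ⟨x, hx⟩ := kern_diff hL hD hφ hφ' hne
        rw [Finset.mem_biUnion]
        refine ⟨(x, φ' x \ φ x), ?_, ?_⟩
        · simp only [Finset.mem_filter, Finset.mem_univ, true_and]
          exact ⟨hx, Finset.disjoint_sdiff⟩
        · rw [Finset.mem_filter]
          refine ⟨hAR, ?_⟩
          rw [emb_subset_iff] at hsubA ⊢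
          have h2 := emb_subset_iff.mp ((Finset.subset_insert _ _).trans hins)
          intro x'
          by_cases e : x' = x
          · subst e
            simp only [if_true]
            exact Finset.union_subset (h2 x') (Finset.sdiff_subset.trans (hsubA x'))
          · simp only [e, if_false]; exact h2 x'
      refine (Finset.card_le_card hsub).trans (Finset.card_biUnion_le.trans ?_)
      have h3 : ∀ z ∈ (Finset.univ : Finset (P × Finset Q)).filter
            (fun z => s ≤ z.2.card ∧ Disjoint (φ z.1) z.2),
          (R.filter (fun A =>
            emb ι (fun x => if x = z.1 then φ x ∪ z.2 else φ x) ⊆ A)).card ≤ cc n r (k + s) := by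
        intro z hz
        simp only [Finset.mem_filter, Finset.mem_univ, true_and] at hz
        rw [hR, card_emb_sup hι]
        apply cc_anti n r hr hn
        have h4 : ∀ x, (if x = z.1 then φ x ∪ z.2 else φ x).card =
            (φ x).card + if x = z.1 then z.2.card else 0 := by
          intro x
          by_cases e : x = z.1
          · simp only [e, if_true]
            exact Finset.card_union_of_disjoint hz.2
          · simp [e]
        simp_rw [h4]
        rw [Finset.sum_add_distrib, kern_size hL hD hφ]
        simp only [Finset.sum_ite_eq', Finset.mem_univ, if_true]
        omega
      refine (Finset.sum_le_card_nsmul _ _ _ h3).trans ?_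
      rw [smul_eq_mul]
      apply Nat.mul_le_mul_right
      refine (Finset.card_filter_le _ _).trans ?_
      rw [Finset.card_univ, Fintype.card_prod, Fintype.card_finset]
    have := Finset.sum_le_sum hterm
    rw [Finset.sum_const, Finset.sum_add_distrib, Finset.sum_const, smul_eq_mul,
      smul_eq_mul] at this
    omega
  · intro φ hφ φ' hφ' hne
    rw [Function.onFun, Finset.disjoint_left]
    intro A h1 h2
    rw [hV, Finset.mem_filter, Finset.mem_filter] at h1 h2
    exact h1.2 φ' hφ' (Ne.symm hne) ((Finset.subset_insert _ _).trans h2.1.2)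

end Embedding

theorem exists_max_family (n r : ℕ) (G : Finset (Finset ℕ)) (hr : 0 < r)
    (hG : G ⊆ (Finset.Icc 1 n).powersetCard r) (hGi : IsIntersecting G) :
    ∃ F, G ⊆ F ∧ IsFamily n r F ∧ IsMaxIntersecting n r F := by
  classical
  set R := (Finset.Icc 1 n).powersetCard r with hR
  obtain ⟨F, hF, hmax⟩ := Finset.exists_max_image
    (R.powerset.filter (fun F => G ⊆ F ∧ IsIntersecting F)) Finset.card
    ⟨G, Finset.mem_filter.mpr ⟨Finset.mem_powerset.mpr hG, subset_rfl, hGi⟩⟩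
  rw [Finset.mem_filter, Finset.mem_powerset] at hF
  obtain ⟨hFR, hGF, hFi⟩ := hF
  refine ⟨F, hGF, fun A hA => Finset.mem_powersetCard.mp (hFR hA), hFi, ?_⟩
  intro A hAs hAc hAF
  by_contra hcon
  push Not at hcon
  have h1 : ∀ B ∈ F, (B ∩ A).Nonempty := fun B hB => hcon B hB
  have h2 := hmax (insert A F) (by
    rw [Finset.mem_filter, Finset.mem_powerset]
    refine ⟨Finset.insert_subset (Finset.mem_powersetCard.mpr ⟨hAs, hAc⟩) hFR,
      hGF.trans (Finset.subset_insert _ _), ?_⟩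
    intro B hB C hC
    rw [Finset.mem_insert] at hB hC
    rcases hB with rfl | hB <;> rcases hC with rfl | hC
    · rw [Finset.inter_self, ← Finset.card_pos, hAc]; exact hr
    · rw [Finset.inter_comm]; exact h1 C hC
    · exact h1 B hB
    · exact hFi B hB C hC)
  rw [Finset.card_insert_of_notMem hAF] at h2
  omega

theorem final_arith (r n k c c1 N Nx m D d : ℝ) (hr : 100 ≤ r) (hn : r ^ 2 ≤ n)
    (hk1 : r ≤ 3 * k) (hk2 : 3 * k ≤ 2 * r) (hm : 10 * k ^ 2 ≤ 11 * m)
    (hc : 0 ≤ c) (hc1 : 0 ≤ c1) (hN : 0 ≤ N) (hNx : Nx * m = N * k)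
    (hD : D ≤ Nx * c + N * c1 + N * c * (3 * (r ^ 5)⁻¹))
    (hd : N * c1 ≤ d + N * c1 * r⁻¹) (hcc : (n - k) * c1 = (r - k) * c) :
    4 * r ^ 2 * D ≤ 25 * n * d := by
  have hr0 : 0 < r := by linarith
  have hk0 : 0 < k := by linarith
  have hn0 : 0 < n := by nlinarith
  have hm0 : 0 < m := by nlinarith
  have hrk : r ≤ 3 * (r - k) := by linarith
  have hNc : 0 ≤ N * c := by positivity
  have hNc1 : 0 ≤ N * c1 := by positivity
  have hrinv : r⁻¹ ≤ 1 / 100 := by rw [inv_le_comm₀ hr0 (by norm_num)]; norm_num; exact hr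
  have hd' : (99 / 100) * (N * c1) ≤ d := by nlinarith
  have h1 : 2 * r ^ 2 ≤ 9 * (k * (r - k)) := by nlinarith [mul_nonneg (sub_nonneg.mpr hk1) (sub_nonneg.mpr hk2)]
  -- bound for Nx
  have h2 : 4 * r ^ 2 * k ≤ 20 * (r - k) * m := by
    have e1 : 4 * r ^ 2 * k ≤ 18 * (k * (r - k)) * k := by nlinarith
    have e2 : (r - k) * (10 * k ^ 2) ≤ (r - k) * (11 * m) :=
      mul_le_mul_of_nonneg_left hm (by linarith)
    have e3 : 0 ≤ (r - k) * m := by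
      apply mul_nonneg (by linarith) hm0.le
    nlinarith
  have h3 : 4 * r ^ 2 * Nx ≤ 20 * (r - k) * N := by
    have e : (4 * r ^ 2 * Nx) * m ≤ (20 * (r - k) * N) * m := by
      calc (4 * r ^ 2 * Nx) * m = N * (4 * r ^ 2 * k) := by linear_combination 4 * r ^ 2 * hNx
        _ ≤ N * (20 * (r - k) * m) := mul_le_mul_of_nonneg_left h2 hN
        _ = _ := by ring
    exact le_of_mul_le_mul_right e hm0
  have h4 : 4 * r ^ 2 * (3 * (r ^ 5)⁻¹) ≤ (3 / 4) * (r - k) := by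
    have e : 4 * r ^ 2 * (3 * (r ^ 5)⁻¹) = 12 * (r⁻¹) ^ 3 := by field_simp; norm_num
    have e0 : 0 ≤ r⁻¹ := by positivity
    have e2 : (r⁻¹) ^ 3 ≤ (1 / 100) ^ 3 := pow_le_pow_left₀ e0 hrinv 3
    have e3 : ((1 : ℝ) / 100) ^ 3 ≤ 1 := by norm_num
    rw [e]; linarith
  have h5 : (r - k) * c ≤ n * c1 := by rw [← hcc]; nlinarith
  have h6 : (r - k) * (N * c) ≤ n * (N * c1) := by nlinarith
  calc 4 * r ^ 2 * D ≤ 4 * r ^ 2 * (Nx * c + N * c1 + N * c * (3 * (r ^ 5)⁻¹)) := by gcongr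
    _ = (4 * r ^ 2 * Nx) * c + (r ^ 2) * (4 * (N * c1)) + (4 * r ^ 2 * (3 * (r ^ 5)⁻¹)) * (N * c) := by
        ring
    _ ≤ (20 * (r - k) * N) * c + n * (4 * (N * c1)) + ((3 / 4) * (r - k)) * (N * c) := by
        gcongr
    _ = (83 / 4) * ((r - k) * (N * c)) + 4 * (n * (N * c1)) := by ring
    _ ≤ (83 / 4) * (n * (N * c1)) + 4 * (n * (N * c1)) := by gcongr
    _ = 25 * n * ((99 / 100) * (N * c1)) := by ring
    _ ≤ _ := by gcongr

theorem main_planes {P Q : Type} [Fintype P] [DecidableEq P] [Fintype Q] [DecidableEq Q]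
    {q : ℕ} {L : Finset (Finset P)} {D : Finset (Finset Q)}
    (hL : IsPlane q L) (hD : IsPlane 23 D) (n r : ℕ) (hr : 1000 ≤ r) (hn : r ^ 2 ≤ n)
    (hq : 23 ≤ q) (hq1 : r ≤ 72 * (q + 1)) (hq2 : 36 * (q + 1) ≤ r)
    (hQ : 2 ^ Fintype.card Q ≤ r) :
    ∃ F : Finset (Finset ℕ), IsFamily n r F ∧ IsMaxIntersecting n r F ∧ Covers n F ∧
      4 * r ^ 2 * maxDeg n F ≤ 25 * n * minDeg n F := by
  classical
  have hr0 : 0 < r := by omega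
  have hrn : 2 * r ≤ n := by nlinarith
  set k := (q + 1) * (23 + 1) with hk
  have hkr : 3 * k ≤ 2 * r := by rw [hk]; omega
  have hkr' : r ≤ 3 * k := by rw [hk]; omega
  have hPQ : Fintype.card (P × Q) ≤ n := by
    rw [Fintype.card_prod, hL.card_pts, hD.card_pts]
    refine le_trans ?_ hn
    nlinarith
  -- the embedding
  obtain ⟨ι, hι⟩ : ∃ ι : P × Q ↪ ℕ, ∀ z, ι z ∈ Finset.Icc 1 n := by
    refine ⟨((Fintype.equivFin (P × Q)).toEmbedding.trans Fin.valEmbedding).trans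
      (addRightEmbedding 1), ?_⟩
    intro z
    have := (Fintype.equivFin (P × Q) z).isLt
    simp only [Function.Embedding.trans_apply, Finset.mem_Icc, addRightEmbedding_apply,
      Equiv.coe_toEmbedding, Fin.valEmbedding_apply]
    omega
  set R := (Finset.Icc 1 n).powersetCard r with hR
  set G : Finset (Finset ℕ) := R.filter (fun A => ∃ φ ∈ kern L D, emb ι φ ⊆ A) with hG
  obtain ⟨F, hGF, hFfam, hFmax⟩ := exists_max_family n r G hr0 (Finset.filter_subset _ _) (by
    intro A hA B hB
    rw [hG, Finset.mem_filter] at hA hB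
    obtain ⟨-, φ, hφ, hA⟩ := hA
    obtain ⟨-, φ', hφ', hB⟩ := hB
    obtain ⟨x, y, hy⟩ := kern_inter hL hD hφ hφ'
    rw [Finset.mem_inter] at hy
    exact ⟨ι (x, y), Finset.mem_inter.mpr ⟨hA (mem_emb.mpr hy.1), hB (mem_emb.mpr hy.2)⟩⟩)
  have hFR : F ⊆ R := fun A hA => Finset.mem_powersetCard.mpr (hFfam A hA)
  have hFm : ∀ A ∈ F, ∀ φ ∈ kern L D, (emb ι φ ∩ A).Nonempty := by
    intro A hA φ hφ
    by_contra hcon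
    rw [Finset.not_nonempty_iff_eq_empty, ← Finset.disjoint_iff_inter_eq_empty] at hcon
    have hs : emb ι φ ⊆ Finset.Icc 1 n \ A := by
      intro i hi
      exact Finset.mem_sdiff.mpr ⟨emb_subset_Icc hι φ hi, Finset.disjoint_left.mp hcon hi⟩
    have hc1 : (emb ι φ).card ≤ r := by
      rw [card_emb, kern_size hL hD hφ]; omega
    have hc2 : r ≤ (Finset.Icc 1 n \ A).card := by
      rw [Finset.card_sdiff_of_subset (hFfam A hA).1, (hFfam A hA).2]
      simp; omega
    obtain ⟨B, hB1, hB2, hB3⟩ := Finset.exists_subsuperset_card_eq hs hc1 hc2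
    have hBF : B ∈ F := hGF (Finset.mem_filter.mpr ⟨Finset.mem_powersetCard.mpr
      ⟨hB2.trans Finset.sdiff_subset, hB3⟩, φ, hφ, hB1⟩)
    obtain ⟨i, hi⟩ := hFmax.1 B hBF A hA
    rw [Finset.mem_inter] at hi
    exact (Finset.mem_sdiff.mp (hB2 hi.1)).2 hi.2
  have hPr : Fintype.card P ≤ r ^ 2 := by rw [hL.card_pts]; nlinarith
  have hbad := badSets_card hL hD n r hr0 hn (by omega) hPr hQ le_rfl hι
  rw [← hk] at hbad
  set c : ℝ := ((cc n r k : ℕ) : ℝ) with hc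
  set c1 : ℝ := ((cc n r (k + 1) : ℕ) : ℝ) with hc1
  set N : ℝ := (((kern L D).card : ℕ) : ℝ) with hN
  have hNpos : 0 < (kern L D).card := by
    rw [kern_card hL hD, hL.card_pts, hD.card_pts]
    exact Nat.mul_pos (by omega) (Nat.pow_pos (by omega))
  have hc1pos : 0 < cc n r (k + 1) := by
    rw [cc, if_pos (by omega)]; exact Nat.choose_pos (by omega)
  have hrR : (1000 : ℝ) ≤ r := by exact_mod_cast hr
  have hrR0 : (0 : ℝ) < r := by linarith
  have hup : ∀ i ∈ Finset.Icc 1 n, (degree F i : ℝ) ≤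
      (((q + 1) * ((23 + 1) * Fintype.card Q ^ q) : ℕ) : ℝ) * c + N * c1 +
        N * c * (3 * ((r : ℝ) ^ 5)⁻¹) := by
    intro i hi
    have h := upper_deg hL hD n r hr0 hn hι F hFR hFm i hi
    rw [← hk] at h
    have h' : (degree F i : ℝ) ≤ (((q + 1) * ((23 + 1) * Fintype.card Q ^ q) : ℕ) : ℝ) * c +
        N * c1 + ((badSets ι L D n r).card : ℝ) := by
      rw [hc, hc1, hN]; exact_mod_cast h
    linarith
  have hlow : ∀ i ∈ Finset.Icc 1 n, N * c1 ≤ (degree F i : ℝ) + N * c1 * (r : ℝ)⁻¹ := by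
    intro i hi
    have h := lower_deg hL hD n r hr0 hn hι F
      (fun A hA φ hφ hs => hGF (Finset.mem_filter.mpr ⟨hA, φ, hφ, hs⟩)) i hi
    rw [← hk] at h
    have h' : N * c1 ≤ (degree F i : ℝ) + N * (((Fintype.card P * 2 ^ Fintype.card Q : ℕ) : ℝ) *
        ((cc n r (k + 23) : ℕ) : ℝ)) := by
      rw [hc1, hN]; exact_mod_cast h
    have h1 := cc_real n r (k + 1) 22 hr0 hn (k + 23) (by omega)
    have h2 : ((Fintype.card P * 2 ^ Fintype.card Q : ℕ) : ℝ) ≤ (r : ℝ) ^ 3 := by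
      have : Fintype.card P * 2 ^ Fintype.card Q ≤ r ^ 3 := by
        calc _ ≤ r ^ 2 * r := Nat.mul_le_mul hPr hQ
          _ = _ := by ring
      exact_mod_cast this
    have h3 : ((Fintype.card P * 2 ^ Fintype.card Q : ℕ) : ℝ) * ((cc n r (k + 23) : ℕ) : ℝ) ≤
        c1 * (r : ℝ)⁻¹ := by
      calc _ ≤ (r : ℝ) ^ 3 * (c1 * ((r : ℝ) ^ 22)⁻¹) := by gcongr
        _ = c1 * ((r : ℝ) ^ 19)⁻¹ := by field_simp
        _ ≤ c1 * (r : ℝ)⁻¹ := by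
          gcongr
          calc (r : ℝ) = (r : ℝ) ^ 1 := by ring
            _ ≤ (r : ℝ) ^ 19 := pow_le_pow_right₀ (by linarith) (by norm_num)
    have h4 : N * (((Fintype.card P * 2 ^ Fintype.card Q : ℕ) : ℝ) *
        ((cc n r (k + 23) : ℕ) : ℝ)) ≤ N * (c1 * (r : ℝ)⁻¹) :=
      mul_le_mul_of_nonneg_left h3 (Nat.cast_nonneg _)
    rw [← mul_assoc] at h4
    linarith
  have hpos : ∀ i ∈ Finset.Icc 1 n, 0 < degree F i := by
    intro i hi
    have h := hlow i hi
    have h1 : 0 < N * c1 := by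
      rw [hN, hc1]; exact mul_pos (by exact_mod_cast hNpos) (by exact_mod_cast hc1pos)
    have h2 : (r : ℝ)⁻¹ ≤ 1 / 2 := by
      rw [inv_le_comm₀ hrR0 (by norm_num)]; norm_num; linarith
    have h3 : (0 : ℝ) < degree F i := by nlinarith
    exact_mod_cast h3
  have hmain : ∀ i ∈ Finset.Icc 1 n, ∀ j ∈ Finset.Icc 1 n,
      4 * r ^ 2 * degree F i ≤ 25 * n * degree F j := by
    intro i hi j hj
    have h := final_arith (r : ℝ) n k c c1 N
      (((q + 1) * ((23 + 1) * Fintype.card Q ^ q) : ℕ) : ℝ)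
      ((Fintype.card P * Fintype.card Q : ℕ) : ℝ) (degree F i) (degree F j)
      (by linarith) (by exact_mod_cast hn) (by exact_mod_cast hkr') (by exact_mod_cast hkr)
      (by
        have : 10 * k ^ 2 ≤ 11 * (Fintype.card P * Fintype.card Q) := by
          rw [hL.card_pts, hD.card_pts, hk]; nlinarith
        exact_mod_cast this)
      (Nat.cast_nonneg _) (Nat.cast_nonneg _) (Nat.cast_nonneg _)
      (by
        rw [hN, kern_card hL hD, hk]; push_cast; ring)
      (hup i hi) (hlow j hj)
      (by
        have h := cc_rec n r k (by omega)
        rw [hc, hc1, ← Nat.cast_sub (by omega), ← Nat.cast_sub (by omega)]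
        exact_mod_cast h)
    exact_mod_cast h
  refine ⟨F, hFfam, hFmax, ?_, ?_⟩
  · intro x hx
    have := hpos x hx
    rw [degree, Finset.card_pos] at this
    obtain ⟨A, hA⟩ := this
    rw [Finset.mem_filter] at hA
    exact ⟨A, hA⟩
  · have hne : (degree F '' Set.Icc 1 n).Nonempty := ⟨_, 1, ⟨le_rfl, by omega⟩, rfl⟩
    have hbd : BddAbove (degree F '' Set.Icc 1 n) := ((Set.finite_Icc 1 n).image _).bddAbove
    obtain ⟨i, hi, hie⟩ := Nat.sSup_mem hne hbd
    obtain ⟨j, hj, hje⟩ := Nat.sInf_mem hne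
    rw [maxDeg, minDeg, ← hie, ← hje]
    exact hmain i (Finset.mem_Icc.mpr hi) j (Finset.mem_Icc.mpr hj)

/-- There is `r₀ > 0` such that for all `r ≥ r₀` and `n ≥ r²` there exists a
maximal intersecting family `F` of `r`-subsets of `[n]` covering `[n]` with
`4·r²·Δ(F) ≤ 25·n·δ(F)`, i.e. `Δ(F)/δ(F) ≤ (25/4)·n/r²`. -/
theorem exists_balanced_family : ∃ r₀ : ℕ, 0 < r₀ ∧ ∀ n r : ℕ, r₀ ≤ r → r ^ 2 ≤ n →
    ∃ F : Finset (Finset ℕ), IsFamily n r F ∧ IsMaxIntersecting n r F ∧ Covers n F ∧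
      4 * r ^ 2 * maxDeg n F ≤ 25 * n * minDeg n F := by
  obtain ⟨Q, iQ, dQ, D, hD⟩ := exists_plane 23 (by norm_num) (by decide)
  refine ⟨max (2 ^ Fintype.card Q) 10000, lt_of_lt_of_le (by norm_num) (le_max_right _ _), ?_⟩
  intro n r hr hn
  have hr1 : 2 ^ Fintype.card Q ≤ r := (le_max_left _ _).trans hr
  have hr2 : 10000 ≤ r := (le_max_right _ _).trans hr
  obtain ⟨q, hqp, hq1, hq2⟩ := Nat.exists_prime_lt_and_le_two_mul (r / 72 - 1) (by omega)
  obtain ⟨P, iP, dP, L, hL⟩ := exists_plane q hqp (hqp.odd_of_ne_two (by omega))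
  exact main_planes hL hD n r (by omega) hn (by omega) (by omega) (by omega) hr1
end
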